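/- arXiv:1906.00191 — 10 statements merged into one kernel-verified Lean document; each statement's English description precedes it below -/
import Mathlib

section
/- Let A, B, C be pairwise disjoint finite point sets in the plane such that A ∪ B ∪ C is in general position, A contains at least two points, and A separates B from C. Then every crossing family in A ∪ B ∪ C emanates from A, or emanates from B, or emanates from C. -/
open Set

abbrev Pt : Type := ℝ × ℝ

/-- Signed area determinant of the triple `(p, q, r)`: positive iff `r` lies strictly to the
left of the directed line from `p` to `q`. -/
def det2 (p q r : Pt) : ℝ :=
  (q.1 - p.1) * (r.2 - p.2) - (q.2 - p.2) * (r.1 - p.1)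

/-- `P` is in general position: no three distinct points of `P` are collinear. -/
def GenPos (P : Set Pt) : Prop :=
  ∀ p ∈ P, ∀ q ∈ P, ∀ r ∈ P, p ≠ q → p ≠ r → q ≠ r →
    ¬ Collinear ℝ ({p, q, r} : Set Pt)

/-- The open segment (relative interior) of an unordered pair of points. -/
def segOpen : Sym2 Pt → Set Pt :=
  Sym2.lift ⟨fun p q => openSegment ℝ p q, fun p q => openSegment_symm ℝ p q⟩

/-- `F` is a crossing family in `P`: a finite set of segments, each joining two distinct
points of `P`, such that every two distinct segments have internally intersecting
open segments. -/
def IsCrossingFamily (P : Set Pt) (F : Finset (Sym2 Pt)) : Prop :=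
  (∀ s ∈ F, ¬ s.IsDiag ∧ ∀ x ∈ s, x ∈ P) ∧
  (∀ s ∈ F, ∀ t ∈ F, s ≠ t → (segOpen s ∩ segOpen t).Nonempty)

/-- A family of segments emanates from `X` if every segment has an endpoint in `X`. -/
def EmanatesFrom (F : Finset (Sym2 Pt)) (X : Set Pt) : Prop :=
  ∀ s ∈ F, ∃ x ∈ s, x ∈ X

/-- `A` and `B` can be separated by a line. -/
def LineSeparated (A B : Set Pt) : Prop :=
  ∃ a b c : ℝ, (a, b) ≠ ((0 : ℝ), (0 : ℝ)) ∧
    (∀ p ∈ A, a * p.1 + b * p.2 < c) ∧ (∀ p ∈ B, c < a * p.1 + b * p.2)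

/-- `A` separates `B` from `C`: `A` and `B ∪ C` are separable by a line, and every line
through two distinct points of `A` has all of `B` strictly on one side and all of `C`
strictly on the other side. -/
def SeparatesFrom (A B C : Set Pt) : Prop :=
  LineSeparated A (B ∪ C) ∧
  ∀ p ∈ A, ∀ q ∈ A, p ≠ q →
    ((∀ x ∈ B, 0 < det2 p q x) ∧ (∀ y ∈ C, det2 p q y < 0)) ∨
    ((∀ x ∈ B, det2 p q x < 0) ∧ (∀ y ∈ C, 0 < det2 p q y))

/-!
Suppose a crossing family emanates from none of `A`, `B`, `C`. Some segment has both ends in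
`B ∪ C`; the line separating `A` from `B ∪ C` keeps it apart from any segment with both ends in
`A`, so every segment has an end outside `A`. Hence a segment avoiding `C` joins a point of `B` to a
point of `A ∪ B`, and a segment avoiding `B` joins a point of `C` to a point of `A ∪ C`. These two
segments have at most two ends in `A`, so there is a line through two points of `A` containing all
of those ends. It weakly separates the two segments, strictly at an end of each, so they cannot
cross.
-/

section OpenSegment

variable {𝕜 E β : Type*} [Ring 𝕜] [PartialOrder 𝕜] [AddCommGroup E] [Module 𝕜 E]
  [AddCommGroup β] [PartialOrder β] [IsOrderedAddMonoid β] [Module 𝕜 β] [PosSMulStrictMono 𝕜 β]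

lemma openSegment_subset_Iio {a b c : β} (ha : a ≤ c) (hb : b < c) :
    openSegment 𝕜 a b ⊆ Iio c := by
  rintro _ ⟨r, t, hr, ht, hrt, rfl⟩
  calc r • a + t • b < r • c + t • c :=
        add_lt_add_of_le_of_lt (smul_le_smul_of_nonneg_left ha hr.le)
          (smul_lt_smul_of_pos_left hb ht)
    _ = c := Convex.combo_self hrt c

lemma openSegment_subset_Ioi {a b c : β} (ha : c ≤ a) (hb : c < b) :
    openSegment 𝕜 a b ⊆ Ioi c :=
  openSegment_subset_Iio (β := βᵒᵈ) ha hb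

lemma disjoint_openSegment_of_affineMap [IsOrderedRing 𝕜] (f : E →ᵃ[𝕜] β) {c : β} {x u y v : E}
    (hx : f x ≤ c) (hu : f u < c) (hy : c ≤ f y) (hv : c < f v) :
    Disjoint (openSegment 𝕜 x u) (openSegment 𝕜 y v) := by
  refine Disjoint.of_image (f := f) ?_
  rw [image_openSegment, image_openSegment]
  exact Iio_disjoint_Ioi_same.mono (openSegment_subset_Iio hx hu) (openSegment_subset_Ioi hy hv)

end OpenSegment

lemma exists_ne_inter_pair_subset {α : Type*} {A : Set α} (hA : A.Nontrivial) (x y : α) :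
    ∃ p ∈ A, ∃ q ∈ A, p ≠ q ∧ A ∩ {x, y} ⊆ {p, q} := by
  have two_le : 2 ≤ A.encard := by
    simpa [one_add_one_eq_two] using Order.add_one_le_of_lt (one_lt_encard_iff_nontrivial.2 hA)
  have pair_le : ({x, y} : Set α).encard ≤ 2 := by
    simpa [one_add_one_eq_two] using encard_insert_le {y} x
  obtain ⟨r, hr, hrA, hcard⟩ := exists_superset_subset_encard_eq inter_subset_left
    ((encard_le_encard inter_subset_right).trans pair_le) two_le
  obtain ⟨p, q, hpq, rfl⟩ := encard_eq_two.1 hcard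
  exact ⟨p, hrA (by simp), q, hrA (by simp), hpq, hr⟩

/-- The affine form on the plane that vanishes on the line `a * x + b * y = c`; its sign tells the
two sides of that line apart. -/
noncomputable def lineForm (a b c : ℝ) : Pt →ᵃ[ℝ] ℝ :=
  (a • LinearMap.fst ℝ ℝ ℝ + b • LinearMap.snd ℝ ℝ ℝ).toAffineMap - AffineMap.const ℝ Pt c

lemma lineForm_apply (a b c : ℝ) (p : Pt) : lineForm a b c p = a * p.1 + b * p.2 - c := by
  simp [lineForm]

/-- The signed area `det2 p q` as an affine form in its last argument. -/
noncomputable def det2Form (p q : Pt) : Pt →ᵃ[ℝ] ℝ :=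
  lineForm (p.2 - q.2) (q.1 - p.1) ((q.1 - p.1) * p.2 - (q.2 - p.2) * p.1)

lemma det2Form_apply (p q r : Pt) : det2Form p q r = det2 p q r := by
  rw [det2Form, lineForm_apply, det2]
  ring

lemma det2_self_left (p q : Pt) : det2 p q p = 0 := by
  simp [det2]

lemma det2_self_right (p q : Pt) : det2 p q q = 0 := by
  rw [det2]
  ring

lemma LineSeparated.exists_affineMap {A B : Set Pt} (h : LineSeparated A B) :
    ∃ f : Pt →ᵃ[ℝ] ℝ, (∀ p ∈ A, f p < 0) ∧ ∀ p ∈ B, 0 < f p := by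
  obtain ⟨a, b, c, -, hA, hB⟩ := h
  refine ⟨lineForm a b c, fun p hp => ?_, fun p hp => ?_⟩
  · simpa only [lineForm_apply, sub_neg] using hA p hp
  · simpa only [lineForm_apply, sub_pos] using hB p hp

lemma LineSeparated.disjoint_segOpen {A B : Set Pt} (h : LineSeparated A B) {s t : Sym2 Pt}
    (hs : ∀ x ∈ s, x ∈ A) (ht : ∀ x ∈ t, x ∈ B) : Disjoint (segOpen s) (segOpen t) := by
  obtain ⟨f, hfA, hfB⟩ := h.exists_affineMap
  induction s with | _ x u
  induction t with | _ y v
  rw [Sym2.ball] at hs ht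
  exact disjoint_openSegment_of_affineMap f (hfA x hs.1).le (hfA u hs.2)
    (hfB y ht.1).le (hfB v ht.2)

section SeparatesFrom

variable {A B C : Set Pt}

lemma SeparatesFrom.exists_affineMap (h : SeparatesFrom A B C) {p q : Pt}
    (hp : p ∈ A) (hq : q ∈ A) (hpq : p ≠ q) :
    ∃ f : Pt →ᵃ[ℝ] ℝ, (∀ x ∈ ({p, q} : Set Pt), f x = 0) ∧
      (∀ x ∈ B, f x < 0) ∧ ∀ x ∈ C, 0 < f x := by
  have det2Form_eq_zero : ∀ x ∈ ({p, q} : Set Pt), det2Form p q x = 0 := by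
    rintro x (rfl | rfl)
    · rw [det2Form_apply, det2_self_left]
    · rw [det2Form_apply, det2_self_right]
  rcases h.2 p hp q hq hpq with ⟨hB, hC⟩ | ⟨hB, hC⟩
  · refine ⟨-det2Form p q, fun x hx => ?_, fun x hx => ?_, fun x hx => ?_⟩
    · simpa using det2Form_eq_zero x hx
    · simpa [det2Form_apply] using hB x hx
    · simpa [det2Form_apply] using hC x hx
  · refine ⟨det2Form p q, det2Form_eq_zero, fun x hx => ?_, fun x hx => ?_⟩
    · simpa only [det2Form_apply] using hB x hx
    · simpa only [det2Form_apply] using hC x hx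

lemma SeparatesFrom.disjoint_openSegment (h : SeparatesFrom A B C) (hA : A.Nontrivial)
    {x u y v : Pt} (hx : x ∈ A ∪ B) (hu : u ∈ B) (hy : y ∈ A ∪ C) (hv : v ∈ C) :
    Disjoint (openSegment ℝ x u) (openSegment ℝ y v) := by
  obtain ⟨p, hp, q, hq, hpq, hsub⟩ := exists_ne_inter_pair_subset hA x y
  obtain ⟨f, hf, hfB, hfC⟩ := h.exists_affineMap hp hq hpq
  have hfx : f x ≤ 0 := hx.elim (fun hxA => (hf x (hsub ⟨hxA, by simp⟩)).le)
    (fun hxB => (hfB x hxB).le)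
  have hfy : 0 ≤ f y := hy.elim (fun hyA => (hf y (hsub ⟨hyA, by simp⟩)).ge)
    (fun hyC => (hfC y hyC).le)
  exact disjoint_openSegment_of_affineMap f hfx (hfB u hu) hfy (hfC v hv)

lemma SeparatesFrom.disjoint_segOpen (h : SeparatesFrom A B C) (hA : A.Nontrivial)
    {s t : Sym2 Pt} (hs : ∀ x ∈ s, x ∈ A ∪ B) (hsB : ∃ u ∈ s, u ∈ B)
    (ht : ∀ x ∈ t, x ∈ A ∪ C) (htC : ∃ v ∈ t, v ∈ C) : Disjoint (segOpen s) (segOpen t) := by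
  obtain ⟨u, hus, hu⟩ := hsB
  obtain ⟨v, hvt, hv⟩ := htC
  obtain ⟨x, rfl⟩ := Sym2.mem_iff_exists.1 hus
  obtain ⟨y, rfl⟩ := Sym2.mem_iff_exists.1 hvt
  rw [Sym2.eq_swap (a := u), Sym2.eq_swap (a := v)]
  exact h.disjoint_openSegment hA (hs x (Sym2.mem_mk_right u x)) hu
    (ht y (Sym2.mem_mk_right v y)) hv

end SeparatesFrom

lemma segOpen_nonempty (s : Sym2 Pt) : (segOpen s).Nonempty := by
  induction s with | _ p q
  exact ⟨midpoint ℝ p q, midpoint_mem_openSegment p q⟩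

section CrossingFamily

variable {P : Set Pt} {F : Finset (Sym2 Pt)}

lemma IsCrossingFamily.not_disjoint_segOpen (hF : IsCrossingFamily P F) {s t : Sym2 Pt}
    (hs : s ∈ F) (ht : t ∈ F) : ¬ Disjoint (segOpen s) (segOpen t) := by
  rw [not_disjoint_iff_nonempty_inter]
  rcases eq_or_ne s t with rfl | hst
  · simpa only [inter_self] using segOpen_nonempty s
  · exact hF.2 s hs t ht hst

lemma not_emanatesFrom_iff {X : Set Pt} : ¬ EmanatesFrom F X ↔ ∃ s ∈ F, ∀ x ∈ s, x ∉ X := by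
  simp only [EmanatesFrom, not_forall, not_exists, not_and, exists_prop]

lemma IsCrossingFamily.exists_mem_notMem_of_lineSeparated {A D : Set Pt}
    (hF : IsCrossingFamily (A ∪ D) F) (h : LineSeparated A D) (hFA : ¬ EmanatesFrom F A)
    {s : Sym2 Pt} (hs : s ∈ F) : ∃ x ∈ s, x ∉ A := by
  obtain ⟨r, hr, hrA⟩ := not_emanatesFrom_iff.1 hFA
  have hrD : ∀ x ∈ r, x ∈ D := fun x hx => ((hF.1 r hr).2 x hx).resolve_left (hrA x hx)
  by_contra! hsA
  exact hF.not_disjoint_segOpen hs hr (h.disjoint_segOpen hsA hrD)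

end CrossingFamily

theorem crossing_family_emanates_of_separates_general {A B C : Set Pt} (hA : A.Nontrivial)
    (hsep : SeparatesFrom A B C) {F : Finset (Sym2 Pt)} (hF : IsCrossingFamily (A ∪ B ∪ C) F) :
    EmanatesFrom F A ∨ EmanatesFrom F B ∨ EmanatesFrom F C := by
  by_contra! ⟨hFA, hFB, hFC⟩
  obtain ⟨s, hs, hsC⟩ := not_emanatesFrom_iff.1 hFC
  obtain ⟨t, ht, htB⟩ := not_emanatesFrom_iff.1 hFB
  have hsAB : ∀ x ∈ s, x ∈ A ∪ B := fun x hx => ((hF.1 s hs).2 x hx).resolve_right (hsC x hx)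
  have hF_ACB : IsCrossingFamily (A ∪ C ∪ B) F := union_right_comm A B C ▸ hF
  have htAC : ∀ x ∈ t, x ∈ A ∪ C := fun x hx => ((hF_ACB.1 t ht).2 x hx).resolve_right (htB x hx)
  have hF_A_BC : IsCrossingFamily (A ∪ (B ∪ C)) F := union_assoc A B C ▸ hF
  obtain ⟨u, hu, huA⟩ := hF_A_BC.exists_mem_notMem_of_lineSeparated hsep.1 hFA hs
  obtain ⟨v, hv, hvA⟩ := hF_A_BC.exists_mem_notMem_of_lineSeparated hsep.1 hFA ht
  exact hF.not_disjoint_segOpen hs ht <| hsep.disjoint_segOpen hA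
    hsAB ⟨u, hu, (hsAB u hu).resolve_left huA⟩ htAC ⟨v, hv, (htAC v hv).resolve_left hvA⟩

theorem crossing_family_emanates_of_separates
    (A B C : Finset Pt)
    (hAB : Disjoint A B) (hAC : Disjoint A C) (hBC : Disjoint B C)
    (hgen : GenPos (↑A ∪ ↑B ∪ ↑C))
    (hA : 2 ≤ A.card)
    (hsep : SeparatesFrom ↑A ↑B ↑C)
    (F : Finset (Sym2 Pt))
    (hF : IsCrossingFamily (↑A ∪ ↑B ∪ ↑C) F) :
    EmanatesFrom F ↑A ∨ EmanatesFrom F ↑B ∨ EmanatesFrom F ↑C :=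
  crossing_family_emanates_of_separates_general
    (Finset.one_lt_card_iff_nontrivial.1 hA) hsep hF
end

section
/- Let k ≥ 1 and let π_1, …, π_k be a sequence of linear orders on a set E of k elements that reverses each pair at most once. For each i ∈ {1,…,k}, let d_i be the element in position i of π_i (the i-th smallest element with respect to π_i). If d_1, …, d_k are pairwise distinct, then for every j ∈ {1,…,k} and every i ∈ {1,…,k} with i ≠ j, the element d_i precedes d_j in the order π_j if and only if i < j. -/
/-- A linear order on `E` presented as an arrangement: the equiv sends the position
(an element of `Fin k`) to the element of `E` occupying that position.
`Before σ x y` means `x` precedes `y` in the order `σ`. -/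
def Before {k : ℕ} {E : Type*} (σ : Fin k ≃ E) (x y : E) : Prop :=
  σ.symm x < σ.symm y

/-- A sequence of linear orders on `E` reverses each pair at most once: for distinct
`x, y` there are no indices `i < j < m` with `x` before `y` at `i`, `y` before `x` at `j`,
and `x` before `y` again at `m`. -/
def ReversesAtMostOnce {l k : ℕ} {E : Type*} (σ : Fin l → (Fin k ≃ E)) : Prop :=
  ∀ x y : E, x ≠ y →
    ¬ ∃ i j m : Fin l, i < j ∧ j < m ∧
        Before (σ i) x y ∧ Before (σ j) y x ∧ Before (σ m) x y

/-!
Write `d i` for `σ i i`. As the `d i` exhaust `E`, exactly `j` of them precede `d j` in `σ j`, so it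
suffices that `d i` precedes `d j` in `σ j` whenever `i < j`. By strong induction the claim holds in
`σ i`, so `d i` precedes there every `d m` with `i < m`. Suppose `d i` does not precede `d j` in
`σ j`, with `j` maximal. Counting gives some `d m` with `j < m` that precedes `d j` in `σ j`. Now
`d i` precedes `d m` in `σ i`, and also in `σ m` by maximality of `j`, hence in `σ j`, as the pair
is reversed at most once. So `d i` precedes `d m`, which precedes `d j`, in `σ j`: a contradiction.
-/

section Before

variable {k l : ℕ} {E : Type*}

theorem Before.trans {σ : Fin k ≃ E} {x y z : E} (hxy : Before σ x y) (hyz : Before σ y z) :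
    Before σ x z :=
  lt_trans hxy hyz

theorem Before.ne {σ : Fin k ≃ E} {x y : E} (hxy : Before σ x y) : x ≠ y :=
  ne_of_apply_ne σ.symm (LT.lt.ne hxy)

theorem before_of_not_before {σ : Fin k ≃ E} {x y : E} (hne : x ≠ y) (h : ¬ Before σ y x) :
    Before σ x y :=
  lt_of_le_of_ne (not_lt.mp h) (σ.symm.injective.ne hne)

theorem ReversesAtMostOnce.before_of_before_of_before {σ : Fin l → (Fin k ≃ E)}
    (hrev : ReversesAtMostOnce σ) {i j m : Fin l} (hij : i < j) (hjm : j < m) {x y : E}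
    (hi : Before (σ i) x y) (hm : Before (σ m) x y) : Before (σ j) x y :=
  before_of_not_before hi.ne fun hj ↦ hrev x y hi.ne ⟨i, j, m, hij, hjm, hi, hj, hm⟩

end Before

section Diagonal

variable {k : ℕ} {E : Type*} {σ : Fin k → (Fin k ≃ E)} {i j : Fin k}

/-- The indices of the diagonal elements `σ i i` preceding the diagonal element `σ j j` in the
order `σ j`. -/
def diagonalPredecessors (σ : Fin k → (Fin k ≃ E)) (j : Fin k) : Set (Fin k) :=
  {i | Before (σ j) (σ i i) (σ j j)}

theorem notMem_diagonalPredecessors_self (σ : Fin k → (Fin k ≃ E)) (j : Fin k) :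
    j ∉ diagonalPredecessors σ j :=
  fun h ↦ Before.ne h rfl

theorem ncard_diagonalPredecessors_eq_ncard_Iio (hd : Function.Injective fun i ↦ σ i i)
    (j : Fin k) : (diagonalPredecessors σ j).ncard = (Set.Iio j).ncard := by
  have hinj : Function.Injective fun i ↦ (σ j).symm (σ i i) := (σ j).symm.injective.comp hd
  have hrange : Set.range (fun i ↦ (σ j).symm (σ i i)) = Set.univ :=
    (Finite.surjective_of_injective hinj).range_eq
  have hpre : diagonalPredecessors σ j = (fun i ↦ (σ j).symm (σ i i)) ⁻¹' Set.Iio j := by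
    ext i
    simp [diagonalPredecessors, Before]
  rw [hpre, Set.ncard_preimage_of_injective_subset_range hinj (hrange ▸ Set.subset_univ _)]

theorem diagonalPredecessors_eq_Iio_of_Iio_subset (hd : Function.Injective fun i ↦ σ i i)
    (h : Set.Iio j ⊆ diagonalPredecessors σ j) : diagonalPredecessors σ j = Set.Iio j :=
  (Set.eq_of_subset_of_ncard_le h (ncard_diagonalPredecessors_eq_ncard_Iio hd j).le).symm

theorem exists_gt_mem_diagonalPredecessors (hd : Function.Injective fun i ↦ σ i i) (hij : i < j)
    (hi : i ∉ diagonalPredecessors σ j) : ∃ m, j < m ∧ m ∈ diagonalPredecessors σ j := by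
  by_contra! hnone
  have hsub : diagonalPredecessors σ j ⊆ Set.Iio j := fun m hm ↦
    lt_of_le_of_ne (not_lt.mp fun hjm ↦ hnone m hjm hm)
      fun hmj ↦ notMem_diagonalPredecessors_self σ j (hmj ▸ hm)
  have heq : diagonalPredecessors σ j = Set.Iio j :=
    Set.eq_of_subset_of_ncard_le hsub (ncard_diagonalPredecessors_eq_ncard_Iio hd j).ge
  exact hi (heq ▸ hij)

theorem mem_diagonalPredecessors_of_diagonalPredecessors_eq_Iio (hrev : ReversesAtMostOnce σ)
    (hd : Function.Injective fun i ↦ σ i i) (hi : diagonalPredecessors σ i = Set.Iio i)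
    (hij : i < j) : i ∈ diagonalPredecessors σ j := by
  induction j using WellFoundedGT.induction with
  | ind j ih =>
    by_contra hnot
    obtain ⟨m, hjm, hm⟩ := exists_gt_mem_diagonalPredecessors hd hij hnot
    have him : i < m := hij.trans hjm
    have hm_notMem : m ∉ diagonalPredecessors σ i := hi ▸ him.not_gt
    have before_at_i : Before (σ i) (σ i i) (σ m m) :=
      before_of_not_before (hd.ne him.ne) hm_notMem
    have before_at_m : Before (σ m) (σ i i) (σ m m) := ih m hjm him
    exact hnot ((hrev.before_of_before_of_before hij hjm before_at_i before_at_m).trans hm)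

theorem diagonalPredecessors_eq_Iio (hrev : ReversesAtMostOnce σ)
    (hd : Function.Injective fun i ↦ σ i i) (j : Fin k) :
    diagonalPredecessors σ j = Set.Iio j := by
  induction j using WellFoundedLT.induction with
  | ind j ih =>
    exact diagonalPredecessors_eq_Iio_of_Iio_subset hd fun i hij ↦
      mem_diagonalPredecessors_of_diagonalPredecessors_eq_Iio hrev hd (ih i hij) hij

end Diagonal

theorem diagonal_structure
    (k : ℕ) (hk : 1 ≤ k) (E : Type) (σ : Fin k → (Fin k ≃ E))
    (hrev : ReversesAtMostOnce σ)
    (hdistinct : Function.Injective (fun i : Fin k => σ i i)) :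
    ∀ j i : Fin k, i ≠ j → (Before (σ j) (σ i i) (σ j j) ↔ i < j) :=
  fun j i _ ↦ Set.ext_iff.mp (diagonalPredecessors_eq_Iio hrev hdistinct j) i
end

section
/- Let n ≥ 2 and let π_1, …, π_{C(n,2)+1} be a simple allowable sequence of permutations of {1, …, n}. Then there exist indices 1 ≤ s_1 < s_2 < … < s_{n-1} ≤ C(n,2)+1 such that, letting ρ_i denote the linear order on {2, …, n} obtained by restricting π_{s_i} to {2, …, n}, the diagonal entries d_1, …, d_{n-1}, where d_i is the element in position i of ρ_i, are pairwise distinct. -/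
/-- A simple allowable sequence of permutations of `Fin n` (as linear orders, written as
position-to-element equivs): it starts with the identity order, each order is obtained
from the previous one by transposing one pair of adjacent elements, and every pair of
elements reverses its relative order exactly once. -/
def SimpleAllowable (n : ℕ) (σ : Fin (n.choose 2 + 1) → (Fin n ≃ Fin n)) : Prop :=
  σ 0 = Equiv.refl (Fin n) ∧
  (∀ t : Fin (n.choose 2), ∃ a b : Fin n, (a : ℕ) + 1 = (b : ℕ) ∧
      σ t.succ = (Equiv.swap a b).trans (σ t.castSucc)) ∧
  (∀ x y : Fin n, x ≠ y →
      ∃! t : Fin (n.choose 2),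
        ¬ (Before (σ t.castSucc) x y ↔ Before (σ t.succ) x y))

/-!
Follow the position of the element `1`. It starts first, and since every other element overtakes
it exactly once it ends last, advancing by at most one place per step. Hence for each `i` there is
a last moment at which it occupies position `i`, and these moments increase with `i`. The step that
follows exchanges `1` with its right neighbour `d i`; once `1` is deleted, `d i` stands in
position `i`. The `d i` are distinct because `1` is exchanged with each element only once.
-/

theorem zero_iff_not_last_of_existsUnique_change {N : ℕ} {f : Fin (N + 1) → Prop}
    (h : ∃! t : Fin N, ¬ (f t.castSucc ↔ f t.succ)) : f 0 ↔ ¬ f (Fin.last N) := by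
  obtain ⟨c, hc, hunique⟩ := h
  have before_change (t : Fin (N + 1)) : (f t ↔ f 0) ↔ t ≤ c.castSucc := by
    induction t using Fin.induction with
    | zero => simp
    | succ t ih =>
      rcases eq_or_ne t c with rfl | htc
      · have : ¬ t.succ ≤ t.castSucc := by simp [Fin.le_def]
        have := ih.2 le_rfl
        tauto
      · have hstep : f t.castSucc ↔ f t.succ := not_not.1 (mt (hunique t) htc)
        rw [← hstep, ih]
        have := Fin.val_ne_of_ne htc
        simp only [Fin.le_def, Fin.val_castSucc, Fin.val_succ]
        omega
  have hlast := (before_change (Fin.last N)).not.2 (Fin.castSucc_lt_last c).not_ge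
  tauto

theorem exists_last_upcrossing {N : ℕ} {p : Fin (N + 1) → ℕ} {i : ℕ} (hzero : p 0 ≤ i)
    (hlast : i < p (Fin.last N)) (hstep : ∀ t : Fin N, p t.succ ≤ p t.castSucc + 1) :
    ∃ t : Fin N, (p t.castSucc = i ∧ p t.succ = i + 1) ∧ ∀ u, p u ≤ i → u ≤ t.castSucc := by
  obtain ⟨t, ht, hmax⟩ := Set.exists_max_image {t | p t ≤ i} id (Set.toFinite _) ⟨0, hzero⟩
  induction t using Fin.lastCases with
  | last => exact absurd ht hlast.not_ge
  | cast t =>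
    have hsucc : i < p t.succ :=
      not_le.1 fun h => (hmax _ h).not_gt t.castSucc_lt_succ
    have hcast : p t.castSucc ≤ i := ht
    have := hstep t
    exact ⟨t, by omega, hmax⟩

theorem exists_strictMono_upcrossing {N m : ℕ} {p : Fin (N + 1) → ℕ} (hzero : p 0 = 0)
    (hlast : m ≤ p (Fin.last N)) (hstep : ∀ t : Fin N, p t.succ ≤ p t.castSucc + 1) :
    ∃ t : Fin m → Fin N, StrictMono t ∧
      ∀ i, p (t i).castSucc = i ∧ p (t i).succ = i + 1 := by
  choose t ht hmax using fun i : Fin m =>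
    exists_last_upcrossing (hzero.trans_le (Nat.zero_le i)) (i.2.trans_le hlast) hstep
  refine ⟨t, fun i j hij => lt_of_le_of_ne ?_ fun h => hij.ne ?_, ht⟩
  · exact hmax j _ ((ht i).1.trans_le (Fin.le_def.1 hij.le))
  · rw [Fin.ext_iff, ← (ht i).1, ← (ht j).1, h]

section Before

variable {k : ℕ} {E : Type*} {σ : Fin k ≃ E} {x y : E}

theorem natCard_before (σ : Fin k ≃ E) (x : E) :
    Nat.card {w // Before σ w x} = (σ.symm x : ℕ) := by
  have e : {w // Before σ w x} ≃ Set.Iio (σ.symm x) :=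
    σ.symm.subtypeEquiv fun _ => Iff.rfl
  simp [Nat.card_congr e]

theorem ne_and_before_iff_of_symm_eq_succ (hxy : (σ.symm y : ℕ) = σ.symm x + 1) (w : E) :
    w ≠ x ∧ Before σ w y ↔ Before σ w x := by
  rw [← σ.symm.injective.ne_iff]
  simp only [Before, Fin.lt_def, ne_eq, Fin.ext_iff]
  omega

theorem natCard_ne_and_before_of_symm_eq_succ (hxy : (σ.symm y : ℕ) = σ.symm x + 1) :
    Nat.card {w // w ≠ x ∧ Before σ w y} = (σ.symm x : ℕ) := by
  simp_rw [ne_and_before_iff_of_symm_eq_succ hxy, natCard_before]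

end Before

/-- The order `τ` arises from `σ` by transposing the elements in two consecutive positions. -/
def AdjacentSwap {k : ℕ} {E : Type*} (σ τ : Fin k ≃ E) : Prop :=
  ∃ a b : Fin k, (a : ℕ) + 1 = (b : ℕ) ∧ τ = (Equiv.swap a b).trans σ

namespace AdjacentSwap

variable {k : ℕ} {E : Type*} {σ τ : Fin k ≃ E} {x y : E}

theorem symm_le_succ (h : AdjacentSwap σ τ) (x : E) : (τ.symm x : ℕ) ≤ σ.symm x + 1 := by
  obtain ⟨a, b, hab, rfl⟩ := h
  rw [Equiv.symm_trans_apply, Equiv.symm_swap, Equiv.swap_apply_def]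
  split_ifs with hxa hxb
  · rw [hxa, hab]
  · rw [hxb]
    omega
  · exact Nat.le_succ _

theorem symm_eq_of_symm_eq (h : AdjacentSwap σ τ) (hxy : σ.symm y = τ.symm x) :
    τ.symm y = σ.symm x := by
  obtain ⟨a, b, -, rfl⟩ := h
  rw [Equiv.symm_trans_apply, Equiv.symm_swap] at hxy ⊢
  rw [hxy, Equiv.swap_apply_self]

theorem not_before_iff_before (h : AdjacentSwap σ τ) (hx : σ.symm x ≠ τ.symm x)
    (hxy : σ.symm y = τ.symm x) : ¬ (Before σ x y ↔ Before τ x y) := by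
  rw [Before, Before, h.symm_eq_of_symm_eq hxy, hxy]
  rcases hx.lt_or_gt with hlt | hgt
  · simp [hlt, hlt.not_gt]
  · simp [hgt, hgt.not_gt]

end AdjacentSwap

/-- Step `t` of a sequence of orders, from the `t`-th order to the next one, reverses the
relative order of `x` and `y`. -/
def ReversesAt {k N : ℕ} {E : Type*} (σ : Fin (N + 1) → (Fin k ≃ E)) (x y : E) (t : Fin N) :
    Prop :=
  ¬ (Before (σ t.castSucc) x y ↔ Before (σ t.succ) x y)

section Sweep

variable {m N : ℕ} {E : Type*} {σ : Fin (N + 1) → (Fin (m + 1) ≃ E)} {z : E}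

theorem symm_last_eq_last_of_existsUnique_reversesAt (hfirst : (σ 0).symm z = 0)
    (hrev : ∀ x, z ≠ x → ∃! t, ReversesAt σ z x t) :
    (σ (Fin.last N)).symm z = Fin.last m := by
  by_contra hne
  obtain ⟨x, hx⟩ := (σ (Fin.last N)).symm.surjective (Fin.last m)
  have hzx : z ≠ x := by
    rintro rfl
    exact hne hx
  have hstart : Before (σ 0) z x := by
    rw [Before, hfirst, Fin.pos_iff_ne_zero, ← hfirst]
    exact (σ 0).symm.injective.ne hzx.symm
  have hend : ¬ Before (σ (Fin.last N)) z x :=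
    (zero_iff_not_last_of_existsUnique_change (f := fun t => Before (σ t) z x)
      (hrev x hzx)).1 hstart
  rw [Before, hx] at hend
  exact hend (Fin.lt_last_iff_ne_last.2 hne)

theorem exists_strictMono_reversesAt_of_existsUnique (hfirst : (σ 0).symm z = 0)
    (hstep : ∀ t : Fin N, AdjacentSwap (σ t.castSucc) (σ t.succ))
    (hrev : ∀ x, z ≠ x → ∃! t, ReversesAt σ z x t) :
    ∃ t : Fin m → Fin N, StrictMono t ∧ ∃ d : Fin m → E, ∀ i,
      ReversesAt σ z (d i) (t i) ∧ ((σ (t i).castSucc).symm z : ℕ) = i ∧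
        ((σ (t i).castSucc).symm (d i) : ℕ) = i + 1 := by
  obtain ⟨t, ht_mono, ht⟩ := exists_strictMono_upcrossing (m := m)
    (p := fun t => ((σ t).symm z : ℕ)) (by simp [hfirst])
    (by simp [symm_last_eq_last_of_existsUnique_reversesAt hfirst hrev])
    fun t => (hstep t).symm_le_succ z
  refine ⟨t, ht_mono, fun i => σ (t i).castSucc ((σ (t i).succ).symm z), fun i => ?_⟩
  obtain ⟨hcast, hsucc⟩ := ht i
  have hmoves : (σ (t i).castSucc).symm z ≠ (σ (t i).succ).symm z :=
    Fin.ne_of_val_ne (by omega)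
  refine ⟨(hstep (t i)).not_before_iff_before hmoves (Equiv.symm_apply_apply _ _), hcast, ?_⟩
  rw [Equiv.symm_apply_apply, hsucc]

theorem simpleAllowable_exists_distinct_diagonal_general (hfirst : (σ 0).symm z = 0)
    (hstep : ∀ t : Fin N, AdjacentSwap (σ t.castSucc) (σ t.succ))
    (hrev : ∀ x, z ≠ x → ∃! t, ReversesAt σ z x t) :
    ∃ s : Fin m → Fin (N + 1), StrictMono s ∧ ∃ d : Fin m → E, Function.Injective d ∧
      ∀ i, d i ≠ z ∧ Nat.card {y // y ≠ z ∧ Before (σ (s i)) y (d i)} = (i : ℕ) := by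
  obtain ⟨t, ht_mono, d, hd⟩ := exists_strictMono_reversesAt_of_existsUnique hfirst hstep hrev
  have hne (i : Fin m) : d i ≠ z := fun h => (hd i).1 (by simp [h, Before])
  refine ⟨fun i => (t i).castSucc, Fin.strictMono_castSucc.comp ht_mono, d, fun i j hij => ?_,
    fun i => ⟨hne i, ?_⟩⟩
  · have hrev_j : ReversesAt σ z (d i) (t j) := hij ▸ (hd j).1
    exact ht_mono.injective ((hrev (d i) (hne i).symm).unique (hd i).1 hrev_j)
  · obtain ⟨-, hz, hdi⟩ := hd i
    rw [natCard_ne_and_before_of_symm_eq_succ (by rw [hdi, hz]), hz]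

end Sweep

/-- In a simple allowable sequence on `{1, …, n}` (element `1` being `(0 : Fin n)`), there
are indices `s 0 < s 1 < … < s (n-2)` such that in the suborders obtained by deleting the
element `1`, the diagonal entries `d i` (the element in position `i` of the restriction of
the `s i`-th order) are pairwise distinct. -/
theorem simpleAllowable_exists_distinct_diagonal
    (n : ℕ) (hn : 2 ≤ n)
    (σ : Fin (n.choose 2 + 1) → (Fin n ≃ Fin n))
    (hσ : SimpleAllowable n σ) :
    ∃ s : Fin (n - 1) → Fin (n.choose 2 + 1), StrictMono s ∧
      ∃ d : Fin (n - 1) → Fin n, Function.Injective d ∧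
        ∀ i : Fin (n - 1),
          d i ≠ ⟨0, by omega⟩ ∧
          Nat.card {y : Fin n // y ≠ ⟨0, by omega⟩ ∧ Before (σ (s i)) y (d i)} = (i : ℕ) := by
  obtain ⟨m, rfl⟩ := Nat.exists_eq_add_of_le' (one_le_two.trans hn)
  obtain ⟨hid, hstep, hrev⟩ := hσ
  exact simpleAllowable_exists_distinct_diagonal_general (by rw [hid]; rfl) hstep (hrev _)
end

section
/- For every integer n ≥ 4 there exists a sequence Π_1, …, Π_l of permutations of {1, …, n} with l = ⌊n/2⌋² + n − 1 such that: Π_1 is the identity permutation; for each i < l, Π_{i+1} either equals Π_i or is obtained from Π_i by exchanging the positions of exactly one pair of elements; every pair of elements reverses its relative order at most once along the sequence; and for every choice of indices 1 ≤ s_1 < s_2 < … < s_n ≤ l, the n entries d_1, …, d_n, where d_i is the element in position i of Π_{s_i}, are not pairwise distinct. -/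
/-- The distance of a position from the nearer end of the arrangement. Mirror positions are exactly
the distinct positions of equal depth, so a depth below `n / 2` names a mirror pair. -/
def mirrorDepth {n : ℕ} (i : Fin n) : ℕ := min i i.rev

section MirrorDepth

variable {n : ℕ} {i j : Fin n}

theorem mirrorDepth_rev (i : Fin n) : mirrorDepth i.rev = mirrorDepth i := by
  rw [mirrorDepth, mirrorDepth, Fin.rev_rev, min_comm]

theorem mirrorDepth_eq_iff : mirrorDepth i = mirrorDepth j ↔ i = j ∨ i = j.rev := by
  simp only [mirrorDepth, Fin.ext_iff, Fin.val_rev]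
  lia

theorem mirrorDepth_lt_half_iff : mirrorDepth i < n / 2 ↔ i.rev ≠ i := by
  simp only [mirrorDepth, ne_eq, Fin.ext_iff, Fin.val_rev]
  lia

theorem mirrorDepth_of_lt_half (hi : (i : ℕ) < n / 2) : mirrorDepth i = i := by
  simp only [mirrorDepth, Fin.val_rev]
  lia

theorem rev_lt_of_mirrorDepth_lt (hij : i < j) (h : mirrorDepth j < mirrorDepth i) :
    i.rev < j := by
  simp only [mirrorDepth, Fin.lt_def, Fin.val_rev] at hij h ⊢
  lia

theorem lt_rev_of_mirrorDepth_lt (hij : i < j) (h : mirrorDepth i < mirrorDepth j) :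
    i < j.rev := by
  simp only [mirrorDepth, Fin.lt_def, Fin.val_rev] at hij h ⊢
  lia

end MirrorDepth

/-- The sequence of arrangements that starts at the identity and exchanges the mirror pair of depth
`a` at time `τ a`. -/
def gradualReversal {n : ℕ} (τ : ℕ → ℕ) (t : ℕ) : Equiv.Perm (Fin n) :=
  Function.Involutive.toPerm (fun i ↦ if τ (mirrorDepth i) ≤ t then i.rev else i) fun i ↦ by
    by_cases h : τ (mirrorDepth i) ≤ t <;> simp [h, mirrorDepth_rev]

section GradualReversal

variable {n : ℕ} {τ : ℕ → ℕ} {t : ℕ} {i x y : Fin n}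

theorem gradualReversal_apply_of_le (h : τ (mirrorDepth i) ≤ t) :
    gradualReversal τ t i = i.rev :=
  if_pos h

theorem gradualReversal_apply_of_lt (h : t < τ (mirrorDepth i)) :
    gradualReversal τ t i = i :=
  if_neg h.not_ge

theorem gradualReversal_apply_of_rev_eq (h : i.rev = i) : gradualReversal τ t i = i :=
  (le_or_gt (τ (mirrorDepth i)) t).elim
    (fun hle ↦ (gradualReversal_apply_of_le hle).trans h) gradualReversal_apply_of_lt

theorem gradualReversal_symm : (gradualReversal τ t : Equiv.Perm (Fin n)).symm =
    gradualReversal τ t :=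
  Function.Involutive.toPerm_symm _

theorem gradualReversal_zero (hτ : ∀ a, 0 < τ a) :
    (gradualReversal τ 0 : Equiv.Perm (Fin n)) = Equiv.refl (Fin n) :=
  Equiv.ext fun _ ↦ gradualReversal_apply_of_lt (hτ _)

theorem gradualReversal_succ_apply_of_ne (h : τ (mirrorDepth i) ≠ t + 1) :
    gradualReversal τ (t + 1) i = gradualReversal τ t i := by
  rcases le_or_gt (τ (mirrorDepth i)) t with hle | hlt
  · rw [gradualReversal_apply_of_le hle, gradualReversal_apply_of_le (by lia)]
  · rw [gradualReversal_apply_of_lt hlt, gradualReversal_apply_of_lt (by lia)]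

theorem gradualReversal_apply_ne_of_mirrorDepth_ne (h : mirrorDepth x ≠ mirrorDepth i) :
    gradualReversal τ t x ≠ i := by
  rintro rfl
  rcases le_or_gt (τ (mirrorDepth x)) t with hle | hlt
  · rw [gradualReversal_apply_of_le hle, mirrorDepth_rev] at h
    exact h rfl
  · rw [gradualReversal_apply_of_lt hlt] at h
    exact h rfl

theorem gradualReversal_succ_of_exchange (hτ : Set.InjOn τ (Set.Iio (n / 2))) (hi : i.rev ≠ i)
    (ht : τ (mirrorDepth i) = t + 1) :
    gradualReversal τ (t + 1) = (gradualReversal τ t).trans (Equiv.swap i i.rev) := by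
  ext1 j
  rw [Equiv.trans_apply]
  by_cases hdepth : mirrorDepth j = mirrorDepth i
  · rw [gradualReversal_apply_of_le (by lia), gradualReversal_apply_of_lt (by lia)]
    rcases mirrorDepth_eq_iff.mp hdepth with rfl | rfl
    · rw [Equiv.swap_apply_left]
    · rw [Equiv.swap_apply_right, Fin.rev_rev]
  · rw [Equiv.swap_apply_of_ne_of_ne (gradualReversal_apply_ne_of_mirrorDepth_ne hdepth)
      (gradualReversal_apply_ne_of_mirrorDepth_ne (by rwa [mirrorDepth_rev]))]
    by_cases hj : j.rev = j
    · rw [gradualReversal_apply_of_rev_eq hj, gradualReversal_apply_of_rev_eq hj]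
    · refine gradualReversal_succ_apply_of_ne fun hjt ↦ hdepth ?_
      exact hτ (mirrorDepth_lt_half_iff.mpr hj) (mirrorDepth_lt_half_iff.mpr hi) (hjt.trans ht.symm)

theorem gradualReversal_succ_eq_or_eq_trans_swap (hτ : Set.InjOn τ (Set.Iio (n / 2))) (t : ℕ) :
    (gradualReversal τ (t + 1) : Equiv.Perm (Fin n)) = gradualReversal τ t ∨
      ∃ x y : Fin n, x ≠ y ∧
        gradualReversal τ (t + 1) = (gradualReversal τ t).trans (Equiv.swap x y) := by
  by_cases h : ∃ i : Fin n, i.rev ≠ i ∧ τ (mirrorDepth i) = t + 1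
  · obtain ⟨i, hi, ht⟩ := h
    exact Or.inr ⟨i, i.rev, hi.symm, gradualReversal_succ_of_exchange hτ hi ht⟩
  · left
    ext1 j
    by_cases hj : j.rev = j
    · rw [gradualReversal_apply_of_rev_eq hj, gradualReversal_apply_of_rev_eq hj]
    · exact gradualReversal_succ_apply_of_ne fun hjt ↦ h ⟨j, hj, hjt⟩

theorem before_gradualReversal_iff (hτ : Antitone τ) (hxy : x < y) :
    Before (gradualReversal τ t) y x ↔ τ (mirrorDepth x) ≤ t ∧ τ (mirrorDepth y) ≤ t := by
  rw [Before, gradualReversal_symm]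
  rcases le_or_gt (τ (mirrorDepth x)) t with hx | hx <;>
    rcases le_or_gt (τ (mirrorDepth y)) t with hy | hy
  · rw [gradualReversal_apply_of_le hx, gradualReversal_apply_of_le hy, Fin.rev_lt_rev]
    exact iff_of_true hxy ⟨hx, hy⟩
  · rw [gradualReversal_apply_of_le hx, gradualReversal_apply_of_lt hy]
    have hdepth : mirrorDepth y < mirrorDepth x := hτ.reflect_lt (hx.trans_lt hy)
    exact iff_of_false (rev_lt_of_mirrorDepth_lt hxy hdepth).not_gt fun h ↦ hy.not_ge h.2
  · rw [gradualReversal_apply_of_lt hx, gradualReversal_apply_of_le hy]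
    have hdepth : mirrorDepth x < mirrorDepth y := hτ.reflect_lt (hy.trans_lt hx)
    exact iff_of_false (lt_rev_of_mirrorDepth_lt hxy hdepth).not_gt fun h ↦ hx.not_ge h.1
  · rw [gradualReversal_apply_of_lt hx, gradualReversal_apply_of_lt hy]
    exact iff_of_false hxy.not_gt fun h ↦ hx.not_ge h.1

theorem before_gradualReversal_mono (hτ : Antitone τ) (hxy : x < y) {u : ℕ} (htu : t ≤ u)
    (h : Before (gradualReversal τ t) y x) : Before (gradualReversal τ u) y x := by
  rw [before_gradualReversal_iff hτ hxy] at h ⊢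
  exact ⟨h.1.trans htu, h.2.trans htu⟩

theorem not_before_gradualReversal_of_reversed (hτ : Antitone τ) (hxy : x ≠ y) {u v : ℕ}
    (htu : t ≤ u) (huv : u ≤ v) (ht : Before (gradualReversal τ t) x y)
    (hu : Before (gradualReversal τ u) y x) : ¬ Before (gradualReversal τ v) x y := by
  rcases hxy.lt_or_gt with hlt | hgt
  · exact lt_asymm (before_gradualReversal_mono hτ hlt huv hu)
  · exact absurd hu (lt_asymm (before_gradualReversal_mono hτ hgt htu ht))

end GradualReversal

section Diagonal

variable {n : ℕ} {τ : ℕ → ℕ} {s : Fin n → ℕ}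

theorem add_sub_le_of_strictMono (hs : StrictMono s) {i j : Fin n} (hij : i ≤ j) :
    s i + (j - i) ≤ s j := by
  have hcard : (Finset.Icc i j).card ≤ (Finset.Icc (s i) (s j)).card := by
    refine Finset.card_le_card_of_injOn s (fun k hk ↦ ?_) hs.injective.injOn
    rw [Finset.mem_coe, Finset.mem_Icc] at hk ⊢
    exact ⟨hs.monotone hk.1, hs.monotone hk.2⟩
  rw [Fin.card_Icc, Nat.card_Icc] at hcard
  have := hs.monotone hij
  lia

theorem sample_rev_lt_of_injective
    (hinj : Function.Injective fun i : Fin n ↦ gradualReversal τ (s i) i) {i : Fin n}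
    (hi : (i : ℕ) < n / 2) (h : s i < τ i) : s i.rev < τ i := by
  have hdepth := mirrorDepth_of_lt_half hi
  have hne : i.rev ≠ i := mirrorDepth_lt_half_iff.mp (hdepth.trans_lt hi)
  by_contra! hrev
  rw [← hdepth] at h
  rw [← hdepth, ← mirrorDepth_rev] at hrev
  refine hne (hinj ?_)
  simp only [gradualReversal_apply_of_le hrev, gradualReversal_apply_of_lt h, Fin.rev_rev]

variable {l : ℕ}

theorem sample_rev_lt_of_injective_of_spacing (hs : StrictMono s) (hsl : ∀ i, s i < l)
    (houter : l < τ 0 + n) (hspacing : ∀ a, a + 1 < n / 2 → τ a + 2 * (a + 1) ≤ τ (a + 1) + n)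
    (hinj : Function.Injective fun i : Fin n ↦ gradualReversal τ (s i) i) (a : ℕ)
    (ha : a < n / 2) : s (Fin.rev ⟨a, by lia⟩) < τ a := by
  induction a with
  | zero =>
    refine sample_rev_lt_of_injective hinj (i := ⟨0, by lia⟩) ha ?_
    have hgap := add_sub_le_of_strictMono hs (i := ⟨0, by lia⟩) (j := ⟨n - 1, by lia⟩)
      (Fin.mk_le_mk.mpr (Nat.zero_le _))
    have hlast := hsl ⟨n - 1, by lia⟩
    dsimp only at hgap ⊢
    lia
  | succ a ih =>
    refine sample_rev_lt_of_injective hinj (i := ⟨a + 1, by lia⟩) ha ?_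
    have hgap := add_sub_le_of_strictMono hs (i := ⟨a + 1, by lia⟩) (j := Fin.rev ⟨a, by lia⟩)
      (Fin.le_def.mpr (by rw [Fin.val_rev]; dsimp only; lia))
    have houtside := ih (by lia)
    have htime := hspacing a ha
    rw [Fin.val_rev] at hgap
    dsimp only at hgap ⊢
    lia

theorem not_injective_gradualReversal_of_spacing (hn : 2 ≤ n) (hs : StrictMono s)
    (hsl : ∀ i, s i < l) (houter : l < τ 0 + n)
    (hspacing : ∀ a, a + 1 < n / 2 → τ a + 2 * (a + 1) ≤ τ (a + 1) + n)
    (hinner : τ (n / 2 - 1) + n / 2 ≤ n) :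
    ¬ Function.Injective fun i : Fin n ↦ gradualReversal τ (s i) i := by
  intro hinj
  have hearly := sample_rev_lt_of_injective_of_spacing hs hsl houter hspacing hinj (n / 2 - 1)
    (by lia)
  have hlate := add_sub_le_of_strictMono hs (i := ⟨0, by lia⟩)
    (j := Fin.rev ⟨n / 2 - 1, by lia⟩) (Fin.mk_le_mk.mpr (Nat.zero_le _))
  rw [Fin.val_rev] at hlate
  dsimp only at hlate
  lia

end Diagonal

/-- The time at which the mirror pair of depth `a` is exchanged, where `m` is the number of mirror
pairs: the central pair, of depth `m - 1`, is exchanged at time `m`, and the waiting times between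
successive exchanges are then `2, 4, 6, …`. At depths `a ≥ m` the subtraction truncates and the
value is `m`. -/
def exchangeTime (m a : ℕ) : ℕ := m + (m - a) * (m - a - 1)

section ExchangeTime

variable {m : ℕ}

theorem exchangeTime_zero (m : ℕ) : exchangeTime m 0 = m ^ 2 := by
  cases m with
  | zero => rfl
  | succ k =>
    simp only [exchangeTime, Nat.sub_zero, Nat.add_sub_cancel]
    ring

theorem exchangeTime_pred (m : ℕ) : exchangeTime m (m - 1) = m := by
  cases m <;> simp [exchangeTime]

theorem exchangeTime_eq_succ_add {a : ℕ} (ha : a < m) :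
    exchangeTime m a = exchangeTime m (a + 1) + 2 * (m - (a + 1)) := by
  obtain ⟨k, rfl⟩ := Nat.exists_eq_add_of_lt ha
  have hdepth : a + k + 1 - a = k + 1 := by lia
  have hdepth_succ : a + k + 1 - (a + 1) = k := by lia
  rw [exchangeTime, exchangeTime, hdepth, hdepth_succ, Nat.add_sub_cancel]
  cases k with
  | zero => rfl
  | succ k =>
    rw [Nat.add_sub_cancel]
    ring

theorem exchangeTime_pos (hm : 0 < m) (a : ℕ) : 0 < exchangeTime m a :=
  Nat.add_pos_left hm _

theorem antitone_exchangeTime (m : ℕ) : Antitone (exchangeTime m) := fun a b hab ↦ by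
  unfold exchangeTime
  gcongr

theorem strictAntiOn_exchangeTime (m : ℕ) : StrictAntiOn (exchangeTime m) (Set.Iio m) := by
  intro a ha b hb hab
  calc exchangeTime m b ≤ exchangeTime m (a + 1) := antitone_exchangeTime m hab
    _ < exchangeTime m (a + 1) + 2 * (m - (a + 1)) := by rw [Set.mem_Iio] at hb; lia
    _ = exchangeTime m a := (exchangeTime_eq_succ_add ha).symm

end ExchangeTime

/-- There is a sequence `Π_1, …, Π_l` (here `σ 0, …, σ (l-1)`) of permutations of
`{1, …, n}` with `l = ⌊n/2⌋² + n − 1`, starting at the identity, where each permutation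
equals the previous one or is obtained from it by exchanging the positions of exactly one
pair of elements, every pair of elements reverses its relative order at most once, and no
strictly increasing choice of `n` indices yields pairwise distinct diagonal entries. -/
theorem exists_long_sequence_without_distinct_diagonal
    (n : ℕ) (hn : 4 ≤ n) :
    ∃ σ : ℕ → (Fin n ≃ Fin n),
      σ 0 = Equiv.refl (Fin n) ∧
      (∀ i : ℕ, i + 1 < (n / 2) ^ 2 + n - 1 →
        σ (i + 1) = σ i ∨
          ∃ x y : Fin n, x ≠ y ∧ σ (i + 1) = (σ i).trans (Equiv.swap x y)) ∧
      (∀ x y : Fin n, x ≠ y →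
        ¬ ∃ i j m : ℕ, i < j ∧ j < m ∧ m < (n / 2) ^ 2 + n - 1 ∧
            Before (σ i) x y ∧ Before (σ j) y x ∧ Before (σ m) x y) ∧
      (∀ s : Fin n → ℕ, StrictMono s → (∀ i, s i < (n / 2) ^ 2 + n - 1) →
        ¬ Function.Injective (fun i : Fin n => σ (s i) i)) := by
  refine ⟨gradualReversal (exchangeTime (n / 2)),
    gradualReversal_zero (exchangeTime_pos (by lia)),
    fun t _ ↦ gradualReversal_succ_eq_or_eq_trans_swap
      (strictAntiOn_exchangeTime (n / 2)).injOn t, ?_, fun s hs hsl ↦ ?_⟩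
  · rintro x y hxy ⟨i, j, m, hij, hjm, -, hi, hj, hm⟩
    exact not_before_gradualReversal_of_reversed (antitone_exchangeTime (n / 2)) hxy hij.le hjm.le
      hi hj hm
  · refine not_injective_gradualReversal_of_spacing (by lia) hs hsl ?houter ?hspacing ?hinner
    case houter => rw [exchangeTime_zero]; lia
    case hspacing => intro a ha; rw [exchangeTime_eq_succ_add (by lia)]; lia
    case hinner => rw [exchangeTime_pred]; lia
end

section
/- Let n be an even positive integer and let l = n(n−1)/2. For every complete bar stack B_{l,n} on n pillars (a bar stack with l bars in which every pair (a,b) with 1 ≤ a < b ≤ n occurs as a bar), there exists a sequence W of n integers from {0, …, l} such that every side compatible subset for W in B_{l,n} has size at most n/2. -/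
/-- A bar stack `B_{l,n}`: a sequence of `l` bars on `n` pillars. The bar at index
`i : Fin l` is said to be at height `i + 1` and is the pair `(left i, right i)` of
pillars with `left i < right i`; no two bars are equal as pairs. -/
structure BarStack (l n : ℕ) where
  left : Fin l → Fin n
  right : Fin l → Fin n
  lt : ∀ i, left i < right i
  nodup : ∀ i j, left i = left j → right i = right j → i = j

/-- `C` is a side compatible subset for the sequence `w` in the bar stack `S`: there is
an injection `g` of `C` into the index set of `w` such that, writing `f c = w (g c)`,
every bar at height `h` both of whose pillars lie in `C` satisfies either
(P1) both `f`-values are `< h`, or (P2) both `f`-values are `≥ h`. -/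
def SideCompat {l n m : ℕ} (S : BarStack l n) (w : Fin m → ℕ) (C : Finset (Fin n)) : Prop :=
  ∃ g : Fin n → Fin m, Set.InjOn g ↑C ∧
    ∀ i : Fin l, S.left i ∈ C → S.right i ∈ C →
      (w (g (S.left i)) < (i : ℕ) + 1 ∧ w (g (S.right i)) < (i : ℕ) + 1) ∨
      ((i : ℕ) + 1 ≤ w (g (S.left i)) ∧ (i : ℕ) + 1 ≤ w (g (S.right i)))

/-- Ordered side compatible subset: as `SideCompat`, with moreover `f (left i) < f (right i)`
in case (P1) and `f (left i) > f (right i)` in case (P2). -/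
def OrderedSideCompat {l n m : ℕ} (S : BarStack l n) (w : Fin m → ℕ) (C : Finset (Fin n)) :
    Prop :=
  ∃ g : Fin n → Fin m, Set.InjOn g ↑C ∧
    ∀ i : Fin l, S.left i ∈ C → S.right i ∈ C →
      (w (g (S.left i)) < (i : ℕ) + 1 ∧ w (g (S.right i)) < (i : ℕ) + 1 ∧
        w (g (S.left i)) < w (g (S.right i))) ∨
      ((i : ℕ) + 1 ≤ w (g (S.left i)) ∧ (i : ℕ) + 1 ≤ w (g (S.right i)) ∧
        w (g (S.right i)) < w (g (S.left i)))

/-!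
Half of the wires have value `0`, below every bar, and the others have value `l`, at or above
every bar. A bar between two pillars of a side compatible set `C` then forces both of them onto
wires of the same kind. In a complete bar stack any two pillars of `C` are joined by a bar, so `C`
uses wires of one kind only, hence injects into one half.
-/

theorem card_le_max_card_filter_of_injOn {α β : Type*} [Fintype β] {p : β → Prop}
    [DecidablePred p] {C : Finset α} {g : α → β} (hg : Set.InjOn g C)
    (hp : ∀ a ∈ C, ∀ b ∈ C, (p (g a) ↔ p (g b))) :
    C.card ≤ max (Finset.card {j | p j}) (Finset.card {j | ¬ p j}) := by
  obtain rfl | ⟨c, hc⟩ := C.eq_empty_or_nonempty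
  · exact Nat.zero_le _
  by_cases hpc : p (g c)
  · refine le_max_of_le_left (Finset.card_le_card_of_injOn g (fun a ha => ?_) hg)
    simpa using (hp a ha c hc).2 hpc
  · refine le_max_of_le_right (Finset.card_le_card_of_injOn g (fun a ha => ?_) hg)
    simpa using mt (hp a ha c hc).1 hpc

section extremeWires

variable {ι : Type*} {l : ℕ} {p : ι → Prop} [DecidablePred p]

/-- The wire sequence with the least allowed value `0` where `p` holds and the greatest allowed
value `l` elsewhere. Whether a wire is below a bar then does not depend on the height of the bar,
so side compatibility becomes a condition on `p` alone. -/
def extremeWires (l : ℕ) (p : ι → Prop) [DecidablePred p] (j : ι) : ℕ :=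
  if p j then 0 else l

theorem extremeWires_le (j : ι) : extremeWires l p j ≤ l := by
  unfold extremeWires
  split_ifs <;> simp

theorem extremeWires_lt_height_iff (i : Fin l) (j : ι) :
    extremeWires l p j < (i : ℕ) + 1 ↔ p j := by
  unfold extremeWires
  split_ifs with hj <;> simp [hj]

end extremeWires

namespace BarStack

variable {l n m : ℕ} {S : BarStack l n} {C : Finset (Fin n)}

/-- A complete bar stack, in which every pair `(a, b)` of pillars with `a < b` occurs as a bar. -/
def IsComplete (S : BarStack l n) : Prop :=
  ∀ a b : Fin n, a < b → ∃ i, S.left i = a ∧ S.right i = b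

theorem IsComplete.forall_mem_iff (hS : S.IsComplete) {q : Fin n → Prop}
    (hq : ∀ i, S.left i ∈ C → S.right i ∈ C → (q (S.left i) ↔ q (S.right i))) :
    ∀ a ∈ C, ∀ b ∈ C, (q a ↔ q b) := by
  intro a ha b hb
  rcases lt_trichotomy a b with hab | rfl | hba
  · obtain ⟨i, rfl, rfl⟩ := hS a b hab
    exact hq i ha hb
  · rfl
  · obtain ⟨i, rfl, rfl⟩ := hS b a hba
    exact (hq i hb ha).symm

theorem sideCompat_iff {w : Fin m → ℕ} :
    SideCompat S w C ↔ ∃ g : Fin n → Fin m, Set.InjOn g C ∧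
      ∀ i : Fin l, S.left i ∈ C → S.right i ∈ C →
        (w (g (S.left i)) < (i : ℕ) + 1 ↔ w (g (S.right i)) < (i : ℕ) + 1) := by
  simp only [SideCompat, iff_iff_and_or_not_and_not, not_lt]

variable {p : Fin m → Prop} [DecidablePred p]

theorem sideCompat_extremeWires_iff :
    SideCompat S (extremeWires l p) C ↔ ∃ g : Fin n → Fin m, Set.InjOn g C ∧
      ∀ i : Fin l, S.left i ∈ C → S.right i ∈ C → (p (g (S.left i)) ↔ p (g (S.right i))) := by
  simp only [sideCompat_iff, extremeWires_lt_height_iff]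

theorem IsComplete.card_le_max_of_sideCompat_extremeWires (hS : S.IsComplete)
    (hC : SideCompat S (extremeWires l p) C) :
    C.card ≤ max (Finset.card {j | p j}) (Finset.card {j | ¬ p j}) := by
  obtain ⟨g, hg, hbar⟩ := sideCompat_extremeWires_iff.1 hC
  exact card_le_max_card_filter_of_injOn hg (hS.forall_mem_iff (q := fun c => p (g c)) hbar)

end BarStack

theorem max_card_filter_val_lt_half (m : ℕ) :
    max (Finset.card {j : Fin m | (j : ℕ) < m / 2})
      (Finset.card {j : Fin m | ¬ (j : ℕ) < m / 2}) = (m + 1) / 2 := by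
  have hsum := Finset.card_filter_add_card_filter_not (s := Finset.univ)
    (fun j : Fin m => (j : ℕ) < m / 2)
  rw [Finset.card_fin] at hsum
  rw [Fin.card_filter_val_lt] at hsum ⊢
  omega

theorem exists_wires_bounding_sideCompat_complete_general {l n : ℕ} (m : ℕ)
    (S : BarStack l n) (hS : S.IsComplete) :
    ∃ w : Fin m → ℕ, (∀ j, w j ≤ l) ∧
      ∀ C : Finset (Fin n), SideCompat S w C → C.card ≤ (m + 1) / 2 := by
  refine ⟨extremeWires l (fun j : Fin m => (j : ℕ) < m / 2), extremeWires_le, fun C hC => ?_⟩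
  rw [← max_card_filter_val_lt_half]
  exact hS.card_le_max_of_sideCompat_extremeWires hC

theorem exists_wires_bounding_sideCompat_complete
    (n : ℕ) (hn : 0 < n) (hev : Even n)
    (S : BarStack (n * (n - 1) / 2) n)
    (hcomplete : ∀ a b : Fin n, a < b → ∃ i, S.left i = a ∧ S.right i = b) :
    ∃ w : Fin n → ℕ, (∀ j, w j ≤ n * (n - 1) / 2) ∧
      ∀ C : Finset (Fin n), SideCompat S w C → C.card ≤ n / 2 := by
  have half_eq : (n + 1) / 2 = n / 2 := by grind
  simpa only [half_eq] using exists_wires_bounding_sideCompat_complete_general n S hcomplete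
end

section
/- For every positive integer n and every bar stack B_{n,n} (n bars on n pillars), there exists a strictly increasing sequence W = (w_1 < w_2 < … < w_n) of integers from {0, 1, …, n} such that the full set C = {1, …, n} is a side compatible subset for W in B_{n,n}; that is, there is an injection g : {1,…,n} → {1,…,n} such that, writing f(c) = w_{g(c)}, every bar B_i = (a_i, b_i) satisfies either f(a_i) < i and f(b_i) < i, or f(a_i) ≥ i and f(b_i) ≥ i. -/
/-!
Take the wires `0 < 1 < ⋯ < n - 1` and read `g` as an order on the pillars: the bar at height `h`
is compatible exactly when the set of the first `h` pillars contains both or neither of its ends.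
Build these sets greedily, one pillar at a time. If the next bar has exactly one end in the current
set, add the other; if it has both, add any pillar; if it has none, add a pillar off the bar. The
last move fails only when the two ends are the only pillars left, that is, for the bar at height
`n - 1`. Starting from an end of that bar prevents this. At height `1` we need the start to be off
the first bar, and some end of the bar at height `n - 1` is, because the two bars are distinct.
-/

open Finset

section Greedy

variable {α : Type*} [Fintype α] [DecidableEq α]

theorem exists_notMem_mem_insert_iff {s : Finset α} {a b : α} (hs : s ≠ univ)
    (hab : a ∉ s → b ∉ s → #s + 2 < Fintype.card α) :
    ∃ v ∉ s, (a ∈ insert v s ↔ b ∈ insert v s) := by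
  by_cases ha : a ∈ s <;> by_cases hb : b ∈ s
  · obtain ⟨v, hv⟩ : ∃ v, v ∉ s := by simpa [eq_univ_iff_forall] using hs
    exact ⟨v, hv, by simp [ha, hb]⟩
  · exact ⟨b, hb, by simp [ha]⟩
  · exact ⟨a, ha, by simp [hb]⟩
  · have hcard : #(insert a (insert b s)) < Fintype.card α := by
      have := card_insert_le a (insert b s)
      have := card_insert_le b s
      have := hab ha hb
      lia
    obtain ⟨v, -, hv⟩ := exists_mem_notMem_of_card_lt_card (hcard.trans_eq card_univ.symm)
    simp only [mem_insert, not_or] at hv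
    exact ⟨v, hv.2.2, by simp [ha, hb, Ne.symm hv.1, Ne.symm hv.2.1]⟩

variable {P : Finset α → Prop}

theorem exists_nodup_list_forall_prefix (empty : P ∅)
    (step : ∀ s, P s → s ≠ univ → ∃ v ∉ s, P (insert v s)) {k : ℕ} (hk : k ≤ Fintype.card α) :
    ∃ l : List α, l.Nodup ∧ l.length = k ∧ ∀ t, t <+: l → P t.toFinset := by
  induction k with
  | zero => exact ⟨[], by simp, rfl, by simpa using empty⟩
  | succ k ih =>
    obtain ⟨l, hnodup, hlen, hP⟩ := ih (by lia)
    have hne : l.toFinset ≠ univ := by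
      rw [← card_lt_iff_ne_univ, List.toFinset_card_of_nodup hnodup]
      lia
    obtain ⟨v, hv, hPv⟩ := step _ (hP l List.prefix_rfl) hne
    have hvl : v ∉ l := by simpa using hv
    refine ⟨l.concat v, hnodup.concat hvl, by simp [hlen], fun t ht => ?_⟩
    rw [List.concat_eq_append, List.prefix_concat_iff] at ht
    rcases ht with rfl | ht
    · rwa [List.toFinset_append, List.toFinset_cons, List.toFinset_nil, union_insert, union_empty]
    · exact hP t ht

theorem exists_equiv_fin_forall_filter_lt {n : ℕ} (hn : Fintype.card α = n) (empty : P ∅)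
    (step : ∀ s, P s → s ≠ univ → ∃ v ∉ s, P (insert v s)) :
    ∃ e : α ≃ Fin n, ∀ k, P {v | (e v : ℕ) < k} := by
  obtain ⟨l, hnodup, hlen, hP⟩ := exists_nodup_list_forall_prefix empty step hn.ge
  have hmem (v : α) : v ∈ l := by
    rw [← List.mem_toFinset, eq_univ_of_card l.toFinset
      (by rw [List.toFinset_card_of_nodup hnodup, hlen, hn])]
    exact mem_univ v
  refine ⟨(hnodup.getEquivOfForallMemList l hmem).symm.trans (finCongr hlen), fun k => ?_⟩
  convert hP (l.take k) (List.take_prefix k l)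
  ext v
  simp [List.mem_take_iff_idxOf_lt (hmem v)]

end Greedy

namespace BarStack

variable {l n : ℕ} (S : BarStack l n)

/-- The two pillars joined by the bar at index `i`, as an unordered pair. -/
def ends (i : Fin l) : Finset (Fin n) :=
  {S.left i, S.right i}

theorem card_ends (i : Fin l) : #(S.ends i) = 2 :=
  card_pair (S.lt i).ne

theorem ends_injective : Function.Injective S.ends := by
  intro i j hij
  have hi := S.lt i
  have hj := S.lt j
  rw [ends, ends, ← coe_inj, coe_pair, coe_pair, Set.pair_eq_pair_iff] at hij
  rcases hij with ⟨hl, hr⟩ | ⟨hl, hr⟩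
  · exact S.nodup i j hl hr
  · lia

theorem le_choose_two (S : BarStack l n) : l ≤ n.choose 2 := by
  have hcard := card_le_card_of_injOn S.ends (s := univ) (t := powersetCard 2 univ)
    (fun i _ => mem_coe.2 (mem_powersetCard_univ.2 (S.card_ends i))) S.ends_injective.injOn
  simpa using hcard

theorem three_le (hn : 0 < n) (S : BarStack n n) : 3 ≤ n := by
  have hchoose := S.le_choose_two
  by_contra! hlt
  interval_cases n <;> simp at hchoose

theorem exists_mem_ends_notMem_ends {i j : Fin l} (hij : i ≠ j) :
    ∃ c ∈ S.ends j, c ∉ S.ends i := by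
  by_contra! hsub
  have heq : S.ends j = S.ends i := eq_of_subset_of_card_le hsub (by simp only [card_ends, le_refl])
  exact hij (S.ends_injective heq.symm)

theorem exists_notMem_ends_first_mem_ends_penultimate (hn : 3 ≤ n) :
    ∃ c, (∀ i : Fin l, (i : ℕ) = 0 → c ∉ S.ends i) ∧
      ∀ i : Fin l, (i : ℕ) + 2 = n → c ∈ S.ends i := by
  by_cases hl : n - 2 < l
  · have hne : (⟨0, by lia⟩ : Fin l) ≠ ⟨n - 2, hl⟩ := by
      simp only [ne_eq, Fin.mk.injEq]
      lia
    obtain ⟨c, hlast, hfirst⟩ := S.exists_mem_ends_notMem_ends hne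
    refine ⟨c, fun i hi => ?_, fun i hi => ?_⟩
    · rwa [show i = ⟨0, by lia⟩ from Fin.ext hi]
    · rwa [show i = ⟨n - 2, hl⟩ from Fin.ext (by simp only; lia)]
  · obtain ⟨c, hc⟩ : ∃ c, ∀ i : Fin l, (i : ℕ) = 0 → c ∉ S.ends i := by
      rcases l.eq_zero_or_pos with rfl | hpos
      · exact ⟨⟨0, by lia⟩, fun i => i.elim0⟩
      · have hcard : #(S.ends ⟨0, hpos⟩) < #(univ : Finset (Fin n)) := by
          rwa [card_ends, card_fin]
        obtain ⟨c, -, hc⟩ := exists_mem_notMem_of_card_lt_card hcard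
        exact ⟨c, fun i hi => by rwa [show i = ⟨0, hpos⟩ from Fin.ext hi]⟩
    exact ⟨c, hc, fun i hi => by lia⟩

/-- The bar at height `#s`, if there is one, has both or neither of its ends in `s`. When `s` is
the set of pillars matched to the `#s` lowest wires, this is the condition (P1) or (P2). -/
def IsUnsplit (s : Finset (Fin n)) : Prop :=
  ∀ i : Fin l, (i : ℕ) + 1 = #s → (S.left i ∈ s ↔ S.right i ∈ s)

variable {S}

theorem isUnsplit_empty : S.IsUnsplit ∅ := by
  simp [IsUnsplit]

theorem isUnsplit_singleton {c : Fin n} (hc : ∀ i : Fin l, (i : ℕ) = 0 → c ∉ S.ends i) :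
    S.IsUnsplit {c} := by
  intro i hi
  have hci := hc i (by simpa using hi)
  simp only [ends, mem_insert, mem_singleton, not_or] at hci
  simp [Ne.symm hci.1, Ne.symm hci.2]

theorem exists_notMem_isUnsplit_insert {s : Finset (Fin n)} {c : Fin n} (hcs : c ∈ s)
    (hc : ∀ i : Fin l, (i : ℕ) + 2 = n → c ∈ S.ends i) (hs : s ≠ univ) :
    ∃ v ∉ s, S.IsUnsplit (insert v s) := by
  by_cases hl : #s < l
  · let i : Fin l := ⟨#s, hl⟩
    have hroom (ha : S.left i ∉ s) (hb : S.right i ∉ s) : #s + 2 < Fintype.card (Fin n) := by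
      have hdisj : Disjoint (S.ends i) s := by simp [ends, ha, hb]
      have hle : #s + 2 ≤ n := by
        simpa [card_union_of_disjoint hdisj, card_ends, add_comm] using
          card_le_univ (S.ends i ∪ s)
      have hne : #s + 2 ≠ n := fun h => disjoint_left.1 hdisj (hc i h) hcs
      rw [Fintype.card_fin]
      lia
    obtain ⟨v, hv, hiff⟩ := exists_notMem_mem_insert_iff hs hroom
    refine ⟨v, hv, fun j hj => ?_⟩
    obtain rfl : j = i := Fin.ext (by simpa [card_insert_of_notMem hv] using hj)
    exact hiff
  · obtain ⟨v, hv⟩ : ∃ v, v ∉ s := by simpa [eq_univ_iff_forall] using hs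
    refine ⟨v, hv, fun j hj => ?_⟩
    rw [card_insert_of_notMem hv] at hj
    lia

theorem sideCompat_univ_of_forall_isUnsplit (e : Fin n ≃ Fin n)
    (he : ∀ k, S.IsUnsplit {v | (e v : ℕ) < k}) : SideCompat S (Fin.val : Fin n → ℕ) univ := by
  refine ⟨e, e.injective.injOn, fun i _ _ => ?_⟩
  rcases lt_or_ge n (i + 1) with hlt | hle
  · lia
  · have hcard : #{v | (e v : ℕ) < i + 1} = (i : ℕ) + 1 := by
      rw [card_equiv e (t := {j : Fin n | (j : ℕ) < i + 1}) (by simp), Fin.card_filter_val_lt,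
        min_eq_right hle]
    have hiff := he (i + 1) i hcard.symm
    simp only [mem_filter_univ] at hiff
    lia

end BarStack

theorem exists_wires_full_sideCompat_general {l n : ℕ} (hn : 3 ≤ n) (S : BarStack l n) :
    ∃ w : Fin n → ℕ, StrictMono w ∧ (∀ j, w j < n) ∧ SideCompat S w univ := by
  obtain ⟨c, hfirst, hlast⟩ := S.exists_notMem_ends_first_mem_ends_penultimate hn
  let P (s : Finset (Fin n)) : Prop := S.IsUnsplit s ∧ (s.Nonempty → c ∈ s)
  have hempty : P ∅ := ⟨BarStack.isUnsplit_empty, by simp⟩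
  have hstep : ∀ s, P s → s ≠ univ → ∃ v ∉ s, P (insert v s) := by
    rintro s ⟨-, hcs⟩ hs
    rcases s.eq_empty_or_nonempty with rfl | hne
    · exact ⟨c, by simp, by simpa using BarStack.isUnsplit_singleton hfirst, by simp⟩
    · obtain ⟨v, hv, hunsplit⟩ := BarStack.exists_notMem_isUnsplit_insert (hcs hne) hlast hs
      exact ⟨v, hv, hunsplit, fun _ => mem_insert_of_mem (hcs hne)⟩
  obtain ⟨e, he⟩ := exists_equiv_fin_forall_filter_lt (Fintype.card_fin n) hempty hstep
  exact ⟨Fin.val, Fin.val_strictMono, Fin.is_lt,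
    BarStack.sideCompat_univ_of_forall_isUnsplit e fun k => (he k).1⟩

theorem exists_wires_full_sideCompat
    (n : ℕ) (hn : 0 < n) (S : BarStack n n) :
    ∃ w : Fin n → ℕ, StrictMono w ∧ (∀ j, w j ≤ n) ∧
      SideCompat S w (Finset.univ : Finset (Fin n)) := by
  obtain ⟨w, hmono, hlt, hcompat⟩ := exists_wires_full_sideCompat_general (S.three_le hn) S
  exact ⟨w, hmono, fun j => (hlt j).le, hcompat⟩
end

section
/- For every positive integer n and every bar stack B_{n,n} (n bars on n pillars), there exists a strictly increasing sequence W of ⌊n/2⌋ integers from {0, 1, …, n} together with an ordered side compatible subset for W in B_{n,n} of size ⌊n/2⌋. -/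
/-!
Take the wires at `0, 1, …, m - 1` and order the chosen pillars from left to right along them. A bar
of height at least `m` then lies above all wires and satisfies (P1) in the required order, so only
the `m - 1` bars of height less than `m` can do harm. Discarding the left pillar of each of these
leaves at least `n - (m - 1)` pillars, which is at least `m` as soon as `2 * m ≤ n + 1`.
-/

section StrictMono

variable {α β : Type*} [LinearOrder α] [Preorder β]

theorem strictMonoOn_invFun_range [Nonempty α] {f : α → β} (hf : StrictMono f) :
    StrictMonoOn (Function.invFun f) (Set.range f) := by
  rintro _ ⟨a, rfl⟩ _ ⟨b, rfl⟩ hab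
  simpa only [Function.leftInverse_invFun hf.injective _] using hf.lt_iff_lt.mp hab

theorem exists_strictMonoOn_fin {m : ℕ} [NeZero m] {C : Finset α} (hC : C.card = m) :
    ∃ g : α → Fin m, StrictMonoOn g C :=
  ⟨Function.invFun (C.orderEmbOfFin hC), by
    simpa only [Finset.range_orderEmbOfFin] using
      strictMonoOn_invFun_range (C.orderEmbOfFin hC).strictMono⟩

end StrictMono

theorem exists_card_eq_and_forall_mem_imp_le {α : Type*} [Fintype α] {l k m : ℕ} (f : Fin l → α)
    (h : m + k ≤ Fintype.card α) :
    ∃ C : Finset α, C.card = m ∧ ∀ i, f i ∈ C → k ≤ i := by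
  classical
  let low : Finset α := ({i : Fin l | (i : ℕ) < k} : Finset (Fin l)).image f
  have card_low : low.card ≤ k := by
    calc low.card ≤ ({i : Fin l | (i : ℕ) < k} : Finset (Fin l)).card := Finset.card_image_le
      _ = min l k := Fin.card_filter_val_lt
      _ ≤ k := min_le_right l k
  have le_card_compl : m ≤ lowᶜ.card := by
    rw [Finset.card_compl]
    omega
  obtain ⟨C, hC_low, hC⟩ := Finset.exists_subset_card_eq le_card_compl
  refine ⟨C, hC, fun i hi => ?_⟩
  by_contra! hik
  exact Finset.mem_compl.mp (hC_low hi) (Finset.mem_image_of_mem f (by simpa using hik))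

theorem BarStack.two_le {l n : ℕ} (S : BarStack l n) (i : Fin l) : 2 ≤ n := by
  have := S.lt i
  omega

theorem orderedSideCompat_of_forall_lt {l n m : ℕ} [NeZero m] {S : BarStack l n} {w : Fin m → ℕ}
    {C : Finset (Fin n)} (hw : StrictMono w) (hC : C.card = m)
    (hlt : ∀ i, S.left i ∈ C → S.right i ∈ C → ∀ j, w j < (i : ℕ) + 1) :
    OrderedSideCompat S w C := by
  obtain ⟨g, hg⟩ := exists_strictMonoOn_fin hC
  exact ⟨g, hg.injOn, fun i hl hr =>
    .inl ⟨hlt i hl hr _, hlt i hl hr _, hw (hg hl hr (S.lt i))⟩⟩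

theorem exists_wires_half_orderedSideCompat_general {l n m : ℕ} [NeZero m] (S : BarStack l n)
    (hml : m ≤ l + 1) (hmn : 2 * m ≤ n + 1) :
    ∃ w : Fin m → ℕ, StrictMono w ∧ (∀ j, w j ≤ l) ∧
      ∃ C : Finset (Fin n), OrderedSideCompat S w C ∧ C.card = m := by
  obtain ⟨C, hC, hheight⟩ : ∃ C : Finset (Fin n), C.card = m ∧ ∀ i, S.left i ∈ C → m - 1 ≤ i :=
    exists_card_eq_and_forall_mem_imp_le S.left (by
      have := NeZero.pos m
      rw [Fintype.card_fin]
      omega)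
  refine ⟨Fin.val, Fin.val_strictMono, fun j => by omega, C, ?_, hC⟩
  refine orderedSideCompat_of_forall_lt Fin.val_strictMono hC fun i hl _ j => ?_
  have := hheight i hl
  omega

theorem exists_wires_half_orderedSideCompat
    (n : ℕ) (hn : 0 < n) (S : BarStack n n) :
    ∃ w : Fin (n / 2) → ℕ, StrictMono w ∧ (∀ j, w j ≤ n) ∧
      ∃ C : Finset (Fin n), OrderedSideCompat S w C ∧ C.card = n / 2 := by
  have : NeZero (n / 2) := .of_pos (Nat.div_pos (S.two_le ⟨0, hn⟩) two_pos)
  exact exists_wires_half_orderedSideCompat_general S (by omega) (by omega)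
end

section
/- Suppose that for every positive integer n, every bar stack B_{n,n}, and every sequence W of 2n+2 integers from {0, …, n}, there is a side compatible subset of size n for W in B_{n,n}. Then for every positive integer n, every bar stack B_{n,n}, and every sequence W of n integers from {0, …, n}, there is a side compatible subset of size at least ⌊n/2⌋ − 2 for W in B_{n,n}. -/
/-!
Split the pillars into two halves. One of them spans at most half of the bars, and deleting an
endpoint of one of these bars leaves a set `D` of `m = ⌊n/2⌋ - 1` pillars spanning at most `m` bars.
Renumber the bars spanned by `D` as `1, …, e`, and replace each wire height by the number of these
bars that it reaches: whether a wire reaches a given bar does not change. After padding with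
`m - e` further bars on top, the hypothesis for `m` applies to the `2 * m + 2 ≤ n` first wires.
Padding requires `m ≤ m.choose 2`, that is `3 ≤ m`; for smaller `m` at most two pillars are needed,
and two pillars that no bar joins will do.
-/

namespace BarStack

open Finset

variable {l n : ℕ} (S : BarStack l n)

/-- A bar stack as a repetition-free sequence in the set of increasing pairs of pillars. -/
def toEmbedding : Fin l ↪ {p : Fin n × Fin n // p.1 < p.2} where
  toFun i := ⟨(S.left i, S.right i), S.lt i⟩
  inj' i j h := by
    rw [Subtype.mk.injEq, Prod.mk.injEq] at h
    exact S.nodup i j h.1 h.2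

/-- The inverse of `BarStack.toEmbedding`. -/
def ofEmbedding (f : Fin l ↪ {p : Fin n × Fin n // p.1 < p.2}) : BarStack l n where
  left i := (f i).1.1
  right i := (f i).1.2
  lt i := (f i).2
  nodup _ _ hleft hright := f.injective (Subtype.ext (Prod.ext hleft hright))

theorem exists_extension {l' : ℕ} (hl : l ≤ l') (hl' : l' ≤ n.choose 2) :
    ∃ T : BarStack l' n, ∀ i,
      T.left (Fin.castLE hl i) = S.left i ∧ T.right (Fin.castLE hl i) = S.right i := by
  have card_pairs : Nat.card {p : Fin n × Fin n // p.1 < p.2} = n.choose 2 := by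
    rw [Nat.card_eq_fintype_card, Fintype.card_subtype, Fintype.card_product_filter_lt,
      Fintype.card_fin]
  obtain ⟨f, hf⟩ :=
    Fin.Embedding.restrictSurjective_of_le_natCard hl (hl'.trans_eq card_pairs.symm) S.toEmbedding
  refine ⟨ofEmbedding f, fun i ↦ ?_⟩
  have apply_castLE : f (Fin.castLE hl i) = S.toEmbedding i := DFunLike.congr_fun hf i
  exact ⟨congrArg (·.1.1) apply_castLE, congrArg (·.1.2) apply_castLE⟩

/-- The bars both of whose pillars lie in `D`. -/
def inducedBars (D : Finset (Fin n)) : Finset (Fin l) :=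
  {i | S.left i ∈ D ∧ S.right i ∈ D}

variable {S} {D : Finset (Fin n)} {m : ℕ}

@[simp]
theorem mem_inducedBars {i : Fin l} : i ∈ S.inducedBars D ↔ S.left i ∈ D ∧ S.right i ∈ D := by
  simp [inducedBars]

theorem inducedBars_mono : Monotone S.inducedBars := fun _ _ h _ hi ↦
  mem_inducedBars.2 ((mem_inducedBars.1 hi).imp (@h _) (@h _))

theorem disjoint_inducedBars {A B : Finset (Fin n)} (h : Disjoint A B) :
    Disjoint (S.inducedBars A) (S.inducedBars B) :=
  disjoint_left.2 fun _ hA hB ↦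
    disjoint_left.1 h (mem_inducedBars.1 hA).1 (mem_inducedBars.1 hB).1

theorem exists_card_eq_two_inducedBars_eq_empty (S : BarStack l n) (hl : l < n.choose 2) :
    ∃ D : Finset (Fin n), #D = 2 ∧ S.inducedBars D = ∅ := by
  obtain ⟨T, hT⟩ := S.exists_extension l.le_succ hl
  refine ⟨{T.left (Fin.last l), T.right (Fin.last l)}, card_pair (T.lt _).ne,
    eq_empty_of_forall_notMem fun i hi ↦ ?_⟩
  have bar_eq : S.left i = T.left (Fin.last l) ∧ S.right i = T.right (Fin.last l) := by
    have := S.lt i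
    have := T.lt (Fin.last l)
    simp only [mem_inducedBars, mem_insert, mem_singleton] at hi
    grind
  have index_eq : Fin.castLE l.le_succ i = Fin.last l :=
    T.nodup _ _ ((hT i).1.trans bar_eq.1) ((hT i).2.trans bar_eq.2)
  exact i.castSucc_lt_last.ne index_eq

theorem exists_card_eq_two_mul_card_inducedBars_le (S : BarStack l n) (hm : 2 * m ≤ n) :
    ∃ A : Finset (Fin n), #A = m ∧ 2 * #(S.inducedBars A) ≤ l := by
  obtain ⟨A, -, hA⟩ : ∃ A ⊆ (univ : Finset (Fin n)), #A = m :=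
    exists_subset_card_eq (by rw [card_fin]; lia)
  obtain ⟨B, hBA, hB⟩ : ∃ B ⊆ Aᶜ, #B = m :=
    exists_subset_card_eq (by rw [card_compl, Fintype.card_fin]; lia)
  have card_add_card_le : #(S.inducedBars A) + #(S.inducedBars B) ≤ l := by
    rw [← card_union_of_disjoint (disjoint_inducedBars (subset_compl_iff_disjoint_left.1 hBA))]
    exact card_finset_fin_le _
  by_cases h : 2 * #(S.inducedBars A) ≤ l
  · exact ⟨A, hA, h⟩
  · exact ⟨B, hB, by lia⟩

theorem exists_card_inducedBars_erase_le (S : BarStack l n) (hD : D.Nonempty) :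
    ∃ c ∈ D, #(S.inducedBars (D.erase c)) ≤ #(S.inducedBars D) - 1 := by
  obtain h | ⟨i, hi⟩ := (S.inducedBars D).eq_empty_or_nonempty
  · obtain ⟨c, hc⟩ := hD
    have := card_le_card (inducedBars_mono (S := S) (D.erase_subset c))
    exact ⟨c, hc, by rw [h, card_empty] at this ⊢; lia⟩
  · refine ⟨S.left i, (mem_inducedBars.1 hi).1, ?_⟩
    rw [← card_erase_of_mem hi]
    refine card_le_card fun j hj ↦ mem_erase.2 ⟨?_, inducedBars_mono (D.erase_subset _) hj⟩
    rintro rfl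
    exact notMem_erase _ _ (mem_inducedBars.1 hj).1

theorem exists_card_eq_card_inducedBars_le (S : BarStack l n) (hn : 2 * (m + 1) ≤ n)
    (hl : l ≤ 2 * m + 3) :
    ∃ D : Finset (Fin n), #D = m ∧ #(S.inducedBars D) ≤ m := by
  obtain ⟨A, hA, hbars⟩ := S.exists_card_eq_two_mul_card_inducedBars_le hn
  obtain ⟨c, hc, hle⟩ := S.exists_card_inducedBars_erase_le (card_pos.1 (by lia : 0 < #A))
  exact ⟨A.erase c, by rw [card_erase_of_mem hc]; lia, by lia⟩

/-- The bar stack induced on the pillars of `D`, with pillars and bars renumbered in increasing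
order. -/
def restrict (S : BarStack l n) (D : Finset (Fin n)) : BarStack #(S.inducedBars D) #D where
  left j := (D.orderIsoOfFin rfl).symm
    ⟨S.left ((S.inducedBars D).orderEmbOfFin rfl j),
      (mem_inducedBars.1 (orderEmbOfFin_mem _ rfl j)).1⟩
  right j := (D.orderIsoOfFin rfl).symm
    ⟨S.right ((S.inducedBars D).orderEmbOfFin rfl j),
      (mem_inducedBars.1 (orderEmbOfFin_mem _ rfl j)).2⟩
  lt j := (OrderIso.lt_iff_lt _).2 (S.lt _)
  nodup j k hleft hright := by
    simp only [EmbeddingLike.apply_eq_iff_eq, Subtype.mk.injEq] at hleft hright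
    exact (orderEmbOfFin _ rfl).injective (S.nodup _ _ hleft hright)

theorem orderEmbOfFin_left_restrict (S : BarStack l n) (D : Finset (Fin n))
    (j : Fin #(S.inducedBars D)) :
    D.orderEmbOfFin rfl ((S.restrict D).left j) =
      S.left ((S.inducedBars D).orderEmbOfFin rfl j) := by
  simp [restrict, ← coe_orderIsoOfFin_apply]

theorem orderEmbOfFin_right_restrict (S : BarStack l n) (D : Finset (Fin n))
    (j : Fin #(S.inducedBars D)) :
    D.orderEmbOfFin rfl ((S.restrict D).right j) =
      S.right ((S.inducedBars D).orderEmbOfFin rfl j) := by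
  simp [restrict, ← coe_orderIsoOfFin_apply]

/-- The height of a wire of height `v` in the renumbered stack `S.restrict D`: the number of bars
induced on `D` whose height is at most `v`. -/
def restrictHeight (S : BarStack l n) (D : Finset (Fin n)) (v : ℕ) : ℕ :=
  #{j : Fin #(S.inducedBars D) | ((S.inducedBars D).orderEmbOfFin rfl j : ℕ) < v}

theorem restrictHeight_le (S : BarStack l n) (D : Finset (Fin n)) (v : ℕ) :
    S.restrictHeight D v ≤ #(S.inducedBars D) :=
  card_finset_fin_le _

theorem lt_restrictHeight_iff {v : ℕ} {j : Fin #(S.inducedBars D)} :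
    (j : ℕ) < S.restrictHeight D v ↔ ((S.inducedBars D).orderEmbOfFin rfl j : ℕ) < v :=
  Tuple.lt_card_lt_iff_apply_lt_of_monotone
    (Fin.val_strictMono.monotone.comp (orderEmbOfFin _ rfl).monotone)

end BarStack

section SideCompat

open Finset

variable {l n k : ℕ} {S : BarStack l n} {w : Fin k → ℕ}

theorem sideCompat_of_inducedBars_eq_empty {C : Finset (Fin n)} (hnk : n ≤ k)
    (hC : S.inducedBars C = ∅) : SideCompat S w C :=
  ⟨Fin.castLE hnk, (Fin.castLE_injective hnk).injOn, fun i hleft hright ↦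
    absurd (BarStack.mem_inducedBars.2 ⟨hleft, hright⟩) (hC ▸ notMem_empty i)⟩

theorem SideCompat.map {l' m k' : ℕ} [Nonempty (Fin m)] {T : BarStack l' m} {w' : Fin k' → ℕ}
    {C : Finset (Fin m)} (hC : SideCompat T w' C) (φ : Fin m ↪ Fin n) (ι : Fin k' ↪ Fin k)
    (hbars : ∀ i ∈ S.inducedBars (C.map φ), ∃ j,
      φ (T.left j) = S.left i ∧ φ (T.right j) = S.right i ∧
        ∀ x, (j : ℕ) < w' x ↔ (i : ℕ) < w (ι x)) :
    SideCompat S w (C.map φ) := by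
  obtain ⟨g, hg, hsides⟩ := hC
  have invFun_apply : ∀ a, Function.invFun φ (φ a) = a :=
    Function.leftInverse_invFun φ.injective
  refine ⟨fun c ↦ ι (g (Function.invFun φ c)), ?_, fun i hleft hright ↦ ?_⟩
  · rw [coe_map]
    rintro _ ⟨a, ha, rfl⟩ _ ⟨b, hb, rfl⟩ hab
    simp only [invFun_apply] at hab
    rw [hg ha hb (ι.injective hab)]
  · obtain ⟨j, hjleft, hjright, hside⟩ := hbars i (BarStack.mem_inducedBars.2 ⟨hleft, hright⟩)
    rw [← hjleft, mem_map' φ] at hleft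
    rw [← hjright, mem_map' φ] at hright
    simpa only [← hjleft, ← hjright, invFun_apply, Order.lt_add_one_iff, Order.add_one_le_iff,
      ← not_lt, hside] using hsides j hleft hright

theorem sideCompat_of_forall_sideCompat_univ {l' k' : ℕ} {D : Finset (Fin n)} (hD : D.Nonempty)
    (hbars : #(S.inducedBars D) ≤ l') (hl' : l' ≤ (#D).choose 2) (hk : k' ≤ k)
    (H : ∀ (T : BarStack l' #D) (w' : Fin k' → ℕ), (∀ x, w' x ≤ l') → SideCompat T w' univ) :
    SideCompat S w D := by
  have : Nonempty (Fin #D) := ⟨⟨0, hD.card_pos⟩⟩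
  obtain ⟨T, hT⟩ := (S.restrict D).exists_extension hbars hl'
  have hcompat := H T (fun x ↦ S.restrictHeight D (w (Fin.castLE hk x)))
    fun x ↦ (S.restrictHeight_le D _).trans hbars
  rw [← map_orderEmbOfFin_univ D rfl]
  refine hcompat.map _ (Fin.castLEEmb hk) fun i hi ↦ ?_
  rw [map_orderEmbOfFin_univ, ← mem_coe, ← range_orderEmbOfFin _ rfl] at hi
  obtain ⟨j, rfl⟩ := hi
  refine ⟨Fin.castLE hbars j, ?_, ?_, fun x ↦ BarStack.lt_restrictHeight_iff⟩
  · rw [(hT j).1]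
    exact S.orderEmbOfFin_left_restrict D j
  · rw [(hT j).2]
    exact S.orderEmbOfFin_right_restrict D j

theorem exists_sideCompat_card_eq {m k' : ℕ} (hm : 3 ≤ m)
    (H : ∀ (T : BarStack m m) (w' : Fin k' → ℕ), (∀ x, w' x ≤ m) → SideCompat T w' univ)
    (hl : l ≤ 2 * m + 3) (hn : 2 * (m + 1) ≤ n) (hk : k' ≤ k)
    (S : BarStack l n) (w : Fin k → ℕ) :
    ∃ C : Finset (Fin n), SideCompat S w C ∧ #C = m := by
  obtain ⟨D, rfl, hbars⟩ := S.exists_card_eq_card_inducedBars_le hn hl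
  have card_le_choose_two : #D ≤ (#D).choose 2 := by
    rw [Nat.choose_two_right, Nat.le_div_iff_mul_le two_pos]
    exact Nat.mul_le_mul_left _ (by lia)
  exact ⟨D, sideCompat_of_forall_sideCompat_univ (card_pos.1 (by lia)) hbars card_le_choose_two
    hk H, rfl⟩

end SideCompat

theorem sideCompat_two_n_wires_implies_n_wires_general
    (H : ∀ n : ℕ, 0 < n → ∀ S : BarStack n n, ∀ w : Fin (2 * n + 2) → ℕ,
      (∀ j, w j ≤ n) → ∃ C : Finset (Fin n), SideCompat S w C ∧ C.card = n)
    {l n k : ℕ} (hl : l ≤ n) (hk : n ≤ k) (S : BarStack l n) (w : Fin k → ℕ) :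
    ∃ C : Finset (Fin n), SideCompat S w C ∧ n / 2 - 1 ≤ C.card := by
  obtain hn | hn | hn : n < 4 ∨ (4 ≤ n ∧ n < 8) ∨ 8 ≤ n := by lia
  · exact ⟨∅, sideCompat_of_inducedBars_eq_empty hk (by simp [BarStack.inducedBars]), by lia⟩
  · have lt_choose_two : n < n.choose 2 := by
      obtain ⟨_, _⟩ := hn
      interval_cases n <;> decide
    obtain ⟨C, hcard, hC⟩ :=
      S.exists_card_eq_two_inducedBars_eq_empty (hl.trans_lt lt_choose_two)
    exact ⟨C, sideCompat_of_inducedBars_eq_empty hk hC, by lia⟩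
  · have sideCompat_univ (T : BarStack (n / 2 - 1) (n / 2 - 1))
        (w' : Fin (2 * (n / 2 - 1) + 2) → ℕ) (hw' : ∀ j, w' j ≤ n / 2 - 1) :
        SideCompat T w' Finset.univ := by
      obtain ⟨C, hC, hcard⟩ := H _ (by lia) T w' hw'
      rwa [← Finset.card_eq_iff_eq_univ C |>.1 (by rwa [Fintype.card_fin])]
    obtain ⟨C, hC, hcard⟩ :=
      exists_sideCompat_card_eq (by lia) sideCompat_univ (by lia) (by lia) (by lia) S w
    exact ⟨C, hC, hcard.ge⟩

theorem sideCompat_two_n_wires_implies_n_wires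
    (H : ∀ n : ℕ, 0 < n → ∀ S : BarStack n n, ∀ w : Fin (2 * n + 2) → ℕ,
      (∀ j, w j ≤ n) → ∃ C : Finset (Fin n), SideCompat S w C ∧ C.card = n) :
    ∀ n : ℕ, 0 < n → ∀ S : BarStack n n, ∀ w : Fin n → ℕ, (∀ j, w j ≤ n) →
      ∃ C : Finset (Fin n), SideCompat S w C ∧ n / 2 - 2 ≤ C.card := by
  intro n _ S w _
  obtain ⟨C, hC, hcard⟩ := sideCompat_two_n_wires_implies_n_wires_general H le_rfl le_rfl S w
  exact ⟨C, hC, by lia⟩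
end

section
/- For every positive integer n, every bar stack B_{n,n}, and every sequence W of 2n+2 integers from {0, …, n}, there exists a side compatible subset for W in B_{n,n} of size at least ⌊n/2⌋. -/
/-!
Split the wires according to whether their value exceeds `l / 2`; one of the two classes contains
at least half of them. Since all values in a class lie on the same side of `l / 2`, at most `l / 2`
bars can separate two wires of that class. Deleting one pillar of each of these bars leaves a set
of pillars on which the wires of the class can be placed arbitrarily.
-/

namespace BarStack

open Finset

variable {l n m k t : ℕ}

/-- The wires in `s` all lie on the same side of height `h`: either all their values are `< h`, as
in (P1), or all are `≥ h`, as in (P2). Bars at such a height are harmless however the wires in `s`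
are assigned to pillars. -/
def OnOneSide (w : Fin m → ℕ) (s : Finset (Fin m)) (h : ℕ) : Prop :=
  (∀ j ∈ s, w j < h) ∨ ∀ j ∈ s, h ≤ w j

theorem sideCompat_of_onOneSide [NeZero m] {S : BarStack l n} {w : Fin m → ℕ}
    {C : Finset (Fin n)} {s : Finset (Fin m)} (hcard : #C ≤ #s)
    (hside : ∀ i, S.left i ∈ C → S.right i ∈ C → OnOneSide w s (i + 1)) :
    SideCompat S w C := by
  obtain ⟨g, hgs, hg⟩ : ∃ g : Fin n → Fin m, (C : Set (Fin n)) ⊆ g ⁻¹' s ∧ Set.InjOn g C :=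
    C.finite_toSet.exists_injOn_of_encard_le (by simpa using hcard)
  refine ⟨g, hg, fun i hl hr => ?_⟩
  exact (hside i hl hr).imp (fun h => ⟨h _ (hgs hl), h _ (hgs hr)⟩)
    fun h => ⟨h _ (hgs hl), h _ (hgs hr)⟩

theorem exists_card_eq_and_left_notMem (S : BarStack l n) {bad : Finset (Fin l)}
    (hbad : k + #bad ≤ n) :
    ∃ C : Finset (Fin n), #C = k ∧ ∀ i ∈ bad, S.left i ∉ C := by
  have hroom : k ≤ #(bad.image S.left)ᶜ := by
    have himage : #(bad.image S.left) ≤ #bad := card_image_le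
    rw [card_compl, Fintype.card_fin]
    omega
  obtain ⟨C, hC, hCk⟩ := exists_subset_card_eq hroom
  exact ⟨C, hCk, fun i hi hiC => mem_compl.1 (hC hiC) (mem_image_of_mem _ hi)⟩

theorem exists_sideCompat_of_onOneSide [NeZero m] (S : BarStack l n) {w : Fin m → ℕ}
    {s : Finset (Fin m)} {bad : Finset (Fin l)} (hs : k ≤ #s) (hbad : k + #bad ≤ n)
    (hside : ∀ i ∉ bad, OnOneSide w s (i + 1)) :
    ∃ C : Finset (Fin n), SideCompat S w C ∧ #C = k := by
  obtain ⟨C, hCk, hC⟩ := S.exists_card_eq_and_left_notMem hbad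
  exact ⟨C, sideCompat_of_onOneSide (hCk.trans_le hs)
    fun i hl _ => hside i fun hi => hC i hi hl, hCk⟩

theorem exists_sideCompat_of_le_card_filter_le [NeZero m] (S : BarStack l n) {w : Fin m → ℕ}
    (hwires : k ≤ #{j | w j ≤ t}) (hkt : k + min l t ≤ n) :
    ∃ C : Finset (Fin n), SideCompat S w C ∧ #C = k := by
  refine S.exists_sideCompat_of_onOneSide (bad := {i | (i : ℕ) < t}) hwires
    (by rwa [Fin.card_filter_val_lt]) fun i hi => Or.inl fun j hj => ?_
  rw [mem_filter_univ] at hi hj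
  omega

theorem exists_sideCompat_of_le_card_filter_gt [NeZero m] (S : BarStack l n) {w : Fin m → ℕ}
    (hwires : k ≤ #{j | t < w j}) (hkt : k + (l - (t + 1)) ≤ n) :
    ∃ C : Finset (Fin n), SideCompat S w C ∧ #C = k := by
  have hbad : #{i : Fin l | ¬ (i : ℕ) < t + 1} = l - (t + 1) := by
    rw [← compl_filter, card_compl, Fintype.card_fin, Fin.card_filter_val_lt]
    omega
  refine S.exists_sideCompat_of_onOneSide hwires (hbad ▸ hkt) fun i hi => Or.inr fun j hj => ?_
  rw [mem_filter_univ] at hi hj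
  omega

end BarStack

open Finset in
theorem sideCompat_of_two_n_plus_two_wires_general {l n m k : ℕ} [NeZero m] (S : BarStack l n)
    (w : Fin m → ℕ) (hwires : 2 * k ≤ m + 1) (hpillars : k + l / 2 ≤ n) :
    ∃ C : Finset (Fin n), SideCompat S w C ∧ #C = k := by
  have hsplit : #{j | w j ≤ l / 2} + #{j | l / 2 < w j} = m := by
    simpa only [not_le, card_univ, Fintype.card_fin] using
      card_filter_add_card_filter_not (s := univ) (w · ≤ l / 2)
  have hmajority : k ≤ #{j | w j ≤ l / 2} ∨ k ≤ #{j | l / 2 < w j} := by omega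
  rcases hmajority with hlow | hhigh
  · exact S.exists_sideCompat_of_le_card_filter_le hlow (by omega)
  · exact S.exists_sideCompat_of_le_card_filter_gt hhigh (by omega)

theorem sideCompat_of_two_n_plus_two_wires
    (n : ℕ) (hn : 0 < n) (S : BarStack n n)
    (w : Fin (2 * n + 2) → ℕ) (hw : ∀ j, w j ≤ n) :
    ∃ C : Finset (Fin n), SideCompat S w C ∧ n / 2 ≤ C.card := by
  exact (sideCompat_of_two_n_plus_two_wires_general (k := n / 2) S w (by omega) (by omega)).imp
    fun _ hC => ⟨hC.1, hC.2.ge⟩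
end

section
/- For every even integer n ≥ 2, letting l = n(n−1)/2, there exist a complete bar stack B_{l,n} on n pillars (a bar stack with l bars in which every pair (a,b) with 1 ≤ a < b ≤ n occurs as a bar) and a sequence W of (n/2 + 1)(n − 1) integers from {0, …, l} such that every side compatible subset for W in B_{l,n} has size at most n − 1. -/
/-!
Call the residue of `a + b` modulo `n` the class of the pair `{a, b}`, and put classes `2k` and
`2k + 1` into level `k`. If `f` agrees on the two pillars of every bar of level `k < n / 2` (rounded
down, so that both classes occur), then it is invariant under the reflections `a ↦ 2k - a` and
`a ↦ 2k + 1 - a`, hence under their composite `a ↦ a + 1`, so it is constant: each such level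
connects all pillars.

Stack all bars by increasing level, and let `W` contain, for each `t ≤ n / 2`, `n - 1` copies of the
height just below level `t`. If all `n` pillars were side compatible, then for each `k < n / 2` the
pillars assigned a copy with `t ≤ k` would be closed under the bars of level `k`, hence none or all
of them. So all `n` pillars would get copies with the same `t`, of which there are only `n - 1`.
-/

section PairLevel

variable {n : ℕ}

/-- The level of a pair of pillars: half of the residue of their sum modulo `n`, rounded down.
Addition in `Fin n` is modulo `n`. Bars are stacked in order of their levels. -/
def pairLevel (a b : Fin n) : ℕ := (a + b).val / 2

theorem pairLevel_comm (a b : Fin n) : pairLevel a b = pairLevel b a := by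
  rw [pairLevel, pairLevel, add_comm]

variable [NeZero n] {α : Type*}

theorem apply_eq_of_reflection_invariant {f : Fin n → α} {c : Fin n}
    (hc : ∀ a, f (c - a) = f a) (hc_succ : ∀ a, f (c + 1 - a) = f a) (a b : Fin n) :
    f a = f b := by
  have hperiodic : Function.Periodic f 1 := fun x => by
    rw [← hc x, ← hc_succ (c - x)]
    congr 1
    abel
  have apply_eq_zero (x : Fin n) : f x = f 0 := by
    have hx : x.val • (1 : Fin n) = x := by
      open scoped Fin.CommRing in rw [nsmul_one, Fin.cast_val_eq_self]
    rw [← hx, hperiodic.nsmul_eq]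
  rw [apply_eq_zero a, apply_eq_zero b]

theorem apply_eq_of_forall_pairLevel_eq {f : Fin n → α} {k : ℕ} (hk : k < n / 2)
    (hf : ∀ a b, a < b → pairLevel a b = k → f a = f b) (a b : Fin n) : f a = f b := by
  have hf_symm (x y : Fin n) (hxy : pairLevel x y = k) : f x = f y := by
    rcases lt_trichotomy x y with hlt | rfl | hgt
    · exact hf x y hlt hxy
    · rfl
    · exact (hf y x hgt (pairLevel_comm x y ▸ hxy)).symm
  have reflection (c : Fin n) (hc : c.val / 2 = k) (x : Fin n) : f (c - x) = f x :=
    hf_symm _ _ (by rw [pairLevel, sub_add_cancel, hc])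
  let c : Fin n := ⟨2 * k, by lia⟩
  have hc_succ : (c + 1).val = 2 * k + 1 := Fin.val_add_one_of_lt' (by lia)
  exact apply_eq_of_reflection_invariant (reflection c (by simp [c]))
    (reflection (c + 1) (by lia)) a b

end PairLevel

theorem card_subtype_fst_lt_snd (n : ℕ) :
    Fintype.card {p : Fin n × Fin n // p.1 < p.2} = n * (n - 1) / 2 := by
  rw [Fintype.card_subtype, Finset.card_filter, Fintype.sum_prod_type_right]
  simp only [← Finset.card_filter, Finset.filter_gt_eq_Iio, Fin.card_Iio]
  rw [Fin.sum_univ_eq_sum_range (fun i => i), Finset.sum_range_id]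

theorem exists_complete_barStack_monotone {α : Type*} [LinearOrder α] {n : ℕ}
    (level : Fin n → Fin n → α) :
    ∃ S : BarStack (n * (n - 1) / 2) n,
      (∀ a b : Fin n, a < b → ∃ i, S.left i = a ∧ S.right i = b) ∧
      Monotone fun i => level (S.left i) (S.right i) := by
  let enum := (Fintype.equivFinOfCardEq (card_subtype_fst_lt_snd n)).symm
  let enumLevel i := level (enum i).1.1 (enum i).1.2
  let sorted := (Tuple.sort enumLevel).trans enum
  let S : BarStack (n * (n - 1) / 2) n :=
    { left i := (sorted i).1.1
      right i := (sorted i).1.2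
      lt i := (sorted i).2
      nodup i j hleft hright := sorted.injective (Subtype.ext (Prod.ext hleft hright)) }
  refine ⟨S, fun a b hab => ?_, Tuple.monotone_sort enumLevel⟩
  exact ⟨sorted.symm ⟨(a, b), hab⟩, by simp [S], by simp [S]⟩

section Threshold

variable {l : ℕ} {level : Fin l → ℕ}

/-- The number of bars of level below `t`; when levels increase with height, this is the height
just below the first bar of level at least `t`. -/
def levelThreshold (level : Fin l → ℕ) (t : ℕ) : ℕ := Finset.card {i | level i < t}

theorem levelThreshold_le (level : Fin l → ℕ) (t : ℕ) : levelThreshold level t ≤ l :=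
  (Finset.card_le_univ _).trans_eq (Fintype.card_fin l)

theorem lt_levelThreshold_iff (hlevel : Monotone level) {i : Fin l} {t : ℕ} :
    (i : ℕ) < levelThreshold level t ↔ level i < t :=
  Fin.lt_card_filter_univ_iff_apply_of_imp (level · < t) fun _ _ hij => (hlevel hij).trans_lt

/-- The sequence `W`: for each `t < q`, a block of `N` copies of `levelThreshold level t`. -/
def thresholdSeq (level : Fin l → ℕ) (q N : ℕ) (j : Fin (q * N)) : ℕ :=
  levelThreshold level j.divNat

theorem thresholdSeq_lt_succ_iff (hlevel : Monotone level) {q N : ℕ} {i : Fin l}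
    {j : Fin (q * N)} : thresholdSeq level q N j < i + 1 ↔ j.divNat ≤ level i := by
  rw [Nat.lt_succ_iff, ← not_lt, thresholdSeq, lt_levelThreshold_iff hlevel, not_lt]

theorem card_le_of_injOn_of_divNat_eq {ι : Type*} {C : Finset ι} {q N : ℕ} {g : ι → Fin (q * N)}
    (hg : Set.InjOn g C) (hdiv : ∀ a ∈ C, ∀ b ∈ C, (g a).divNat = (g b).divNat) :
    C.card ≤ N := by
  have hmod : Set.InjOn (fun a => (g a).modNat) C := fun a ha b hb hab =>
    hg ha hb <| finProdFinEquiv.symm.injective <| Prod.ext (hdiv a ha b hb) hab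
  simpa using Finset.card_le_card_of_injOn _ (fun _ _ => Finset.mem_univ _) hmod

theorem not_sideCompat_univ_of_levels_connected {n q N : ℕ} {S : BarStack l n}
    (hlevel : Monotone level)
    (hconn : ∀ k < q, ∀ P : Fin n → Prop,
      (∀ i, level i = k → (P (S.left i) ↔ P (S.right i))) → ∀ a b, P a ↔ P b)
    (hN : N < n) : ¬ SideCompat S (thresholdSeq level (q + 1) N) Finset.univ := by
  rintro ⟨g, hg, hbar⟩
  let block (a : Fin n) := (g a).divNat
  have hbar_block (i : Fin l) :
      block (S.left i) ≤ level i ↔ block (S.right i) ≤ level i := by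
    have hi := hbar i (Finset.mem_univ _) (Finset.mem_univ _)
    rw [← thresholdSeq_lt_succ_iff hlevel, ← thresholdSeq_lt_succ_iff hlevel]
    lia
  have hblock_le (a b : Fin n) : block a ≤ block b := by
    by_contra! hlt
    have hq : (block b : ℕ) < q := by lia
    have hiff := hconn (block b) hq (fun c => (block c : ℕ) ≤ block b)
      (fun i hi => hi ▸ hbar_block i) a b
    exact hlt.not_ge (hiff.mpr le_rfl)
  have hcard := card_le_of_injOn_of_divNat_eq hg
    fun a _ b _ => (hblock_le a b).antisymm (hblock_le b a)
  rw [Finset.card_fin] at hcard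
  exact hN.not_ge hcard

end Threshold

theorem exists_complete_barStack_small_sideCompat_general
    (n : ℕ) (hn : n ≠ 0) :
    ∃ S : BarStack (n * (n - 1) / 2) n,
      (∀ a b : Fin n, a < b → ∃ i, S.left i = a ∧ S.right i = b) ∧
      ∃ w : Fin ((n / 2 + 1) * (n - 1)) → ℕ, (∀ j, w j ≤ n * (n - 1) / 2) ∧
        ∀ C : Finset (Fin n), SideCompat S w C → C.card ≤ n - 1 := by
  have : NeZero n := ⟨hn⟩
  obtain ⟨S, hcomplete, hmono⟩ := exists_complete_barStack_monotone (pairLevel (n := n))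
  let level i := pairLevel (S.left i) (S.right i)
  refine ⟨S, hcomplete, thresholdSeq level (n / 2 + 1) (n - 1),
    fun _ => levelThreshold_le _ _, fun C hC => ?_⟩
  have hconn (k : ℕ) (hk : k < n / 2) (P : Fin n → Prop)
      (hP : ∀ i, level i = k → (P (S.left i) ↔ P (S.right i)))
      (a b : Fin n) : P a ↔ P b := by
    refine iff_of_eq (apply_eq_of_forall_pairLevel_eq hk (fun x y hxy hlevel => ?_) a b)
    obtain ⟨i, rfl, rfl⟩ := hcomplete x y hxy
    exact propext (hP i hlevel)
  have hC_ne : C ≠ Finset.univ := by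
    rintro rfl
    exact not_sideCompat_univ_of_levels_connected hmono hconn (Nat.pred_lt hn) hC
  have hcard := (Finset.card_lt_iff_ne_univ C).mpr hC_ne
  rw [Fintype.card_fin] at hcard
  exact Nat.le_pred_of_lt hcard

theorem exists_complete_barStack_small_sideCompat
    (n : ℕ) (hn : 2 ≤ n) (hev : Even n) :
    ∃ S : BarStack (n * (n - 1) / 2) n,
      (∀ a b : Fin n, a < b → ∃ i, S.left i = a ∧ S.right i = b) ∧
      ∃ w : Fin ((n / 2 + 1) * (n - 1)) → ℕ, (∀ j, w j ≤ n * (n - 1) / 2) ∧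
        ∀ C : Finset (Fin n), SideCompat S w C → C.card ≤ n - 1 :=
  exists_complete_barStack_small_sideCompat_general n (by lia)
end
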